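/- A-A-B-paths have the Erdős–Pósa property: there is a function f : ℕ → ℕ such that for every finite simple graph G, all vertex sets A, B ⊆ V(G) and every k ∈ ℕ, either G contains k pairwise vertex-disjoint A-A-B-paths, or there is a set of at most f(k) vertices meeting every A-A-B-path in G. -/

import Mathlib

/-!
The proof is by induction on `k`. Call a graph a haven of order `t` if no `t` vertices meet all
`A`-`A`-`B`-paths and no separation of order at most `t` has `A`-`A`-`B`-paths on both sides. If the
graph is not a haven of suitable order, the induction hypothesis applies to the two sides of a
separation (`pack_or_cover`). So let the graph be a haven of large order; the claim is that it has
`k` disjoint `A`-`A`-`B`-paths (`Haven.pack`).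

Every separation of small order then has a distinguished side, and a set is free if it cannot be
separated from distinguished sides by fewer vertices than it has. Any two free sets of the same size
are linked by disjoint paths (`Haven.link`), by a version of Menger's theorem for families of
starting sets (`menger`). Moreover a set contains a large free set unless few
vertices cover all `A`-`A`-`B`-paths that meet it (`Haven.exists_free`).

A set is doubly free if two paths may be sent from each of its vertices. The central dichotomy
(`Haven.free2_or_lobes`) follows from uncrossing tight sets: either `A` contains a large doubly free
set `Z`, or after deletion of boundedly many vertices the middle `A`-vertex of every remaining
`A`-`A`-`B`-path lies in a lobe, a part that is attached to the rest at a single cut vertex.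

In the first case every vertex of `Z` is the middle vertex of a `B`-`B`-path, all these paths being
disjoint (`Haven.legs`). Linking two halves of `Z` and cutting the linking paths where they first
meet another of the `B`-`B`-paths joins many of these to further vertices of `A`, and such a
configuration contains an `A`-`A`-`B`-path (`bab_link`, `Haven.pack_of_free2`).

In the second case every remaining `A`-`A`-`B`-path passes through a cut vertex and leaves in its lobe
a gadget: an `A`-vertex with two disjoint arms, one leading to the cut vertex and the other to `A` or
`B`. There is a large free set of such cut vertices. Gadgets of the second type are linked in pairs,
and gadgets of the first type are linked to a free subset of `B`; either way disjoint
`A`-`A`-`B`-paths result (`Lobes.pack`).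
-/

open SimpleGraph

/-- An `A`-`A`-`B`-path in `G`: a path with one endvertex in `A`, the other
endvertex in `B`, and at least one interior vertex in `A` (it may contain
further vertices of `A` or `B` in its interior). -/
structure AABPath {V : Type} (G : SimpleGraph V) (A B : Set V) where
  first : V
  last : V
  walk : G.Walk first last
  isPath : walk.IsPath
  firstMem : first ∈ A
  lastMem : last ∈ B
  interiorA : ∃ x ∈ walk.support, x ≠ first ∧ x ≠ last ∧ x ∈ A

namespace AABEP
open scoped Classical Finset

/-! ### Connected sets, forks and trips -/

section
variable {V : Type} {G : SimpleGraph V} {A B : Set V}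

/-- `S` is connected in `G`: any two of its vertices are joined by a walk inside `S`.
The empty set counts as connected. -/
def Conn (G : SimpleGraph V) (S : Set V) : Prop :=
  ∀ x ∈ S, ∀ y ∈ S, ∃ p : G.Walk x y, ∀ z ∈ p.support, z ∈ S

lemma conn_singleton (x : V) : Conn G {x} := by
  rintro _ rfl _ rfl
  exact ⟨Walk.nil, by simp⟩

lemma Conn.union {S T : Set V} (hS : Conn G S) (hT : Conn G T) {x : V}
    (hx : x ∈ S) (hx' : x ∈ T) : Conn G (S ∪ T) := by
  have key : ∀ y ∈ S ∪ T, ∃ p : G.Walk y x, ∀ z ∈ p.support, z ∈ S ∪ T := by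
    rintro y (hy | hy)
    · obtain ⟨p, hp⟩ := hS y hy x hx
      exact ⟨p, fun z hz => Or.inl (hp z hz)⟩
    · obtain ⟨p, hp⟩ := hT y hy x hx'
      exact ⟨p, fun z hz => Or.inr (hp z hz)⟩
  intro y hy z hz
  obtain ⟨p, hp⟩ := key y hy
  obtain ⟨q, hq⟩ := key z hz
  refine ⟨p.append q.reverse, fun w hw => ?_⟩
  rw [Walk.mem_support_append_iff, Walk.support_reverse, List.mem_reverse] at hw
  exact hw.elim (hp w) (hq w)

lemma conn_pair {x y : V} (h : G.Adj x y) : Conn G {x, y} := by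
  rintro a ha b hb
  rcases ha with rfl | rfl <;> rcases hb with rfl | rfl
  · exact ⟨Walk.nil, by simp⟩
  · exact ⟨Walk.cons h Walk.nil, by simp⟩
  · exact ⟨Walk.cons h.symm Walk.nil, by simp⟩
  · exact ⟨Walk.nil, by simp⟩

lemma Conn.union_adj {S T : Set V} (hS : Conn G S) (hT : Conn G T) {x y : V}
    (hx : x ∈ S) (hy : y ∈ T) (h : G.Adj x y) : Conn G (S ∪ T) := by
  have h1 : Conn G (S ∪ {x, y}) := hS.union (conn_pair h) hx (by simp)
  have h2 := h1.union hT (x := y) (by simp) hy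
  have : S ∪ {x, y} ∪ T = S ∪ T := by
    ext z
    simp only [Set.mem_union, Set.mem_insert_iff, Set.mem_singleton_iff]
    constructor
    · rintro ((h | rfl | rfl) | h) <;> tauto
    · tauto
  rwa [this] at h2

lemma Conn.insert_adj {S : Set V} (hS : Conn G S) {a x : V} (hx : x ∈ S) (h : G.Adj a x) :
    Conn G (insert a S) := by
  rw [Set.insert_eq]
  exact (conn_singleton a).union_adj hS rfl hx h

lemma conn_support {x y : V} (p : G.Walk x y) : Conn G {z | z ∈ p.support} := by
  intro u hu v hv
  refine ⟨(p.takeUntil u hu).reverse.append (p.takeUntil v hv), fun z hz => ?_⟩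
  rw [Walk.mem_support_append_iff, Walk.support_reverse, List.mem_reverse] at hz
  exact hz.elim (fun h => p.support_takeUntil_subset_support hu h)
    (fun h => p.support_takeUntil_subset_support hv h)

lemma Conn.exists_path {S : Set V} (hS : Conn G S) {x y : V} (hx : x ∈ S) (hy : y ∈ S) :
    ∃ p : G.Walk x y, p.IsPath ∧ ∀ z ∈ p.support, z ∈ S := by
  obtain ⟨p, hp⟩ := hS x hx y hy
  exact ⟨p.bypass, p.bypass_isPath, fun z hz => hp z (p.support_bypass_subset_support hz)⟩

/-- A connected set that meets `L`, and from which no edge inside the set leaves `L`, lies in `L`. -/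
lemma Conn.closed {S L : Set V} (hS : Conn G S)
    (hcl : ∀ x ∈ S, x ∈ L → ∀ y ∈ S, G.Adj x y → y ∈ L) {x : V} (hx : x ∈ S) (hxL : x ∈ L) :
    S ⊆ L := by
  have key : ∀ (u v : V) (p : G.Walk u v), (∀ z ∈ p.support, z ∈ S) → u ∈ L → v ∈ L := by
    intro u v p
    induction p with
    | nil => exact fun _ h => h
    | cons h p ih =>
      intro hp hu
      refine ih (fun z hz => hp z (by simp [hz])) (hcl _ (hp _ (by simp)) hu _ (hp _ ?_) h)
      simp
  intro y hy
  obtain ⟨p, hp⟩ := hS x hx y hy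
  exact key x y p hp hxL

/-- A path without its first vertex is connected. -/
lemma tail_of_path {c v : V} (p : G.Walk c v) (hp : p.IsPath) :
    ∃ S : Set V, Conn G S ∧ c ∉ S ∧ {z | z ∈ p.support} = insert c S ∧ (v ≠ c → v ∈ S) := by
  cases p with
  | nil =>
    refine ⟨∅, fun x hx => hx.elim, by simp, ?_, by simp⟩
    ext z; simp
  | cons h q =>
    rw [Walk.cons_isPath_iff] at hp
    refine ⟨{z | z ∈ q.support}, conn_support q, hp.2, ?_, fun _ => q.end_mem_support⟩
    ext z; simp

/-- The initial part `R` of a walk before it first enters `M`, together with the entry vertex `v`. -/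
lemma first_hit {M : Set V} {x y : V} (p : G.Walk x y) (hx : x ∉ M) (hy : y ∈ M) :
    ∃ v ∈ M, v ∈ p.support ∧ ∃ R : Set V, Conn G R ∧ x ∈ R ∧ (∀ z ∈ R, z ∈ p.support) ∧
      Disjoint R M ∧ ∃ u ∈ R, G.Adj u v := by
  induction p with
  | nil => exact absurd hy hx
  | @cons x w y h p ih =>
    by_cases hw : w ∈ M
    · refine ⟨w, hw, by simp, {x}, conn_singleton x, rfl, ?_, ?_, x, rfl, h⟩
      · rintro z rfl; simp
      · simpa using hx
    · obtain ⟨v, hv, hvp, R, hR, hwR, hRp, hd, u, hu, huv⟩ := ih hw hy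
      refine ⟨v, hv, by simp [hvp], insert x R, hR.insert_adj hwR h, by simp, ?_, ?_, u,
        by simp [hu], huv⟩
      · rintro z (rfl | hz)
        · simp
        · simp [hRp z hz]
      · rw [Set.disjoint_left] at hd ⊢
        rintro z (rfl | hz)
        · exact hx
        · exact hd hz

/-- Two disjoint connected sets `D` and `E`, both avoiding `a` and both containing a neighbour
of `a`. -/
structure Fork (G : SimpleGraph V) (a : V) (D E : Set V) : Prop where
  connD : Conn G D
  connE : Conn G E
  disj : Disjoint D E
  notD : a ∉ D
  notE : a ∉ E
  adjD : ∃ x ∈ D, G.Adj a x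
  adjE : ∃ x ∈ E, G.Adj a x

lemma Fork.symm {a : V} {D E : Set V} (h : Fork G a D E) : Fork G a E D :=
  ⟨h.connE, h.connD, h.disj.symm, h.notE, h.notD, h.adjE, h.adjD⟩

lemma Fork.conn {a : V} {D E : Set V} (h : Fork G a D E) : Conn G (insert a (D ∪ E)) := by
  obtain ⟨x, hx, hax⟩ := h.adjD
  obtain ⟨y, hy, hay⟩ := h.adjE
  have := (h.connD.insert_adj hx hax).union (h.connE.insert_adj hy hay) (x := a) (by simp) (by simp)
  have e : insert a D ∪ insert a E = insert a (D ∪ E) := by ext z; simp; tauto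
  rwa [e] at this

/-- A set version of an `A`-`A`-`B`-path: a fork at a vertex `a` of `A` whose side `D` meets `A`
and whose side `E` meets `B`. Choosing a path in each side gives an `A`-`A`-`B`-path with interior
vertex `a`. Sets are used instead of paths because they can be enlarged without care for
shortcuts. -/
structure Trip (G : SimpleGraph V) (A B : Set V) (a : V) (D E : Set V) : Prop where
  fork : Fork G a D E
  mem : a ∈ A
  memD : (D ∩ A).Nonempty
  memE : (E ∩ B).Nonempty

/-- The vertex set `K` contains an `A`-`A`-`B`-path, in the form of a `Trip`. -/
def AAB (G : SimpleGraph V) (A B : Set V) (K : Set V) : Prop :=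
  ∃ a D E, Trip G A B a D E ∧ insert a (D ∪ E) ⊆ K

lemma AAB.mono {K K' : Set V} (h : AAB G A B K) (hK : K ⊆ K') : AAB G A B K' := by
  obtain ⟨a, D, E, h1, h2⟩ := h
  exact ⟨a, D, E, h1, h2.trans hK⟩

lemma Trip.aab {a : V} {D E : Set V} (h : Trip G A B a D E) : AAB G A B (insert a (D ∪ E)) :=
  ⟨a, D, E, h, subset_rfl⟩

/-! ### Menger's theorem -/
section Menger

/-- Submodularity of the cardinality, in the form used for all uncrossing arguments. -/
lemma card_submod {P Q R S : Finset V} (h1 : P ∪ Q ⊆ R ∪ S) (h2 : P ∩ Q ⊆ R ∩ S) :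
    #P + #Q ≤ #R + #S := by
  rw [← Finset.card_union_add_card_inter P Q, ← Finset.card_union_add_card_inter R S]
  exact add_le_add (Finset.card_le_card h1) (Finset.card_le_card h2)

lemma sdiff_supermod (Z U W : Finset V) :
    #(Z \ U) + #(Z \ W) ≤ #(Z \ (U ∪ W)) + #(Z \ (U ∩ W)) := by
  apply card_submod <;> intro x <;> simp <;> tauto

/-- The boundary of `U` in `G[Y]` when every vertex of `T` has an additional neighbour inside `U`:
the vertices of `Y` outside `U` that lie in `T` or have a neighbour in `U`. -/
noncomputable def bdT (G : SimpleGraph V) (Y T U : Finset V) : Finset V :=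
  Y.filter fun v => v ∉ U ∧ (v ∈ T ∨ ∃ u ∈ U, G.Adj u v)

lemma mem_bdT {Y T U : Finset V} {v : V} :
    v ∈ bdT G Y T U ↔ v ∈ Y ∧ v ∉ U ∧ (v ∈ T ∨ ∃ u ∈ U, G.Adj u v) := by
  simp [bdT]

lemma bdT_submod (Y T U W : Finset V) :
    #(bdT G Y T (U ∪ W)) + #(bdT G Y T (U ∩ W)) ≤ #(bdT G Y T U) + #(bdT G Y T W) := by
  apply card_submod
  · intro v
    simp only [Finset.mem_union, mem_bdT, Finset.mem_inter]
    rintro (⟨h1, h2, h3 | ⟨u, hu, h⟩⟩ | ⟨h1, h2, h3 | ⟨u, hu, h⟩⟩)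
    · tauto
    · rcases hu with hu | hu
      · exact Or.inl ⟨h1, by tauto, Or.inr ⟨u, hu, h⟩⟩
      · exact Or.inr ⟨h1, by tauto, Or.inr ⟨u, hu, h⟩⟩
    · tauto
    · by_cases hv : v ∈ U
      · exact Or.inr ⟨h1, by tauto, Or.inr ⟨u, hu.2, h⟩⟩
      · exact Or.inl ⟨h1, by tauto, Or.inr ⟨u, hu.1, h⟩⟩
  · intro v
    simp only [Finset.mem_union, mem_bdT, Finset.mem_inter]
    rintro ⟨⟨h1, h2, -⟩, -, -, h3 | ⟨u, hu, h⟩⟩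
    · tauto
    · exact ⟨⟨h1, by tauto, Or.inr ⟨u, hu.1, h⟩⟩, ⟨h1, by tauto, Or.inr ⟨u, hu.2, h⟩⟩⟩

variable {ι : Type}

lemma card_filter_erase {J : Finset ι} {P : ι → Prop} [DecidablePred P] {i : ι} (hi : i ∈ J)
    (h : P i) :
    #((J.erase i).filter P) + 1 = #(J.filter P) := by
  rw [Finset.filter_erase, Finset.card_erase_add_one]
  simp [hi, h]

lemma filter_erase_of_not {J : Finset ι} {P : ι → Prop} [DecidablePred P] {i : ι} (h : ¬ P i) :
    (J.erase i).filter P = J.filter P := by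
  rw [Finset.filter_erase, Finset.erase_eq_of_notMem]
  simp [h]

lemma missed_supermod (J : Finset ι) (S : ι → Finset V) (U W : Finset V) :
    #(J.filter fun i => Disjoint (S i) U) + #(J.filter fun i => Disjoint (S i) W) ≤
      #(J.filter fun i => Disjoint (S i) (U ∪ W)) +
        #(J.filter fun i => Disjoint (S i) (U ∩ W)) := by
  rw [← Finset.card_union_add_card_inter, add_comm]
  refine add_le_add (Finset.card_le_card ?_) (Finset.card_le_card ?_)
  · intro i
    simp only [Finset.mem_inter, Finset.mem_filter, Finset.disjoint_union_right]
    tauto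
  · intro i
    simp only [Finset.mem_union, Finset.mem_filter]
    rintro (⟨h, h'⟩ | ⟨h, h'⟩)
    · exact ⟨h, h'.mono_right Finset.inter_subset_left⟩
    · exact ⟨h, h'.mono_right Finset.inter_subset_right⟩

/-- Disjoint paths in `G[Y]`, one for each index `i ∈ J`, from a vertex of `S i` to a vertex of
`T`, where `C i` is the vertex set of the path; each path meets `T` in its last vertex only. -/
def Linked (G : SimpleGraph V) (J : Finset ι) (S : ι → Finset V) (Y T : Finset V)
    (C : ι → Set V) : Prop :=
  (∀ i ∈ J, ∃ u ∈ S i, ∃ w ∈ T, ∃ p : G.Walk u w, p.IsPath ∧ C i = {z | z ∈ p.support} ∧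
      C i ⊆ Y ∧ ∀ z ∈ p.support, z ∈ T → z = w) ∧
    ∀ i ∈ J, ∀ j ∈ J, i ≠ j → Disjoint (C i) (C j)

/-- Menger's theorem for families of starting sets: if every `U ⊆ Y` satisfies
`#{i ∈ J | S i ∩ U = ∅} ≤ #(bdT G Y T U)`, then there are disjoint paths in `G[Y]` linking each
`S i` to `T`. The left side is the number of paths forced to start outside `U`; the right side
counts the vertices through which they can pass to `T`.

The induction is on `#Y` and then on the total size of the `S i`. Either a vertex `v` of some
`S i` can be dropped from `S i`, or a tight set `U1` prevents this; in that case uncrossing with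
`U1` shows that path `i` may start at `v`, and `v` is removed from the graph. -/
theorem menger (G : SimpleGraph V) (T : Finset V) : ∀ (N m : ℕ) (Y : Finset V) (J : Finset ι)
    (S : ι → Finset V), #Y = N → ∑ i ∈ J, #(S i) = m → (∀ i ∈ J, S i ⊆ Y) →
    (∀ U ⊆ Y, #(J.filter fun i => Disjoint (S i) U) ≤ #(bdT G Y T U)) →
    ∃ C : ι → Set V, Linked G J S Y T C := by
  intro N
  induction N using Nat.strong_induction_on with
  | _ N ihN =>
  intro m
  induction m using Nat.strong_induction_on with
  | _ m ihm =>
  intro Y J S hY hm hS hcond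
  rcases J.eq_empty_or_nonempty with rfl | ⟨i, hi⟩
  · exact ⟨fun _ => ∅, by simp, by simp⟩
  -- The condition for `U = Y` says that no `S i` is empty.
  have hne : (S i).Nonempty := by
    by_contra hne
    rw [Finset.not_nonempty_iff_eq_empty] at hne
    have h1 := hcond Y subset_rfl
    have h2 : bdT G Y T Y = ∅ := by
      ext v; simp only [mem_bdT, Finset.notMem_empty]; tauto
    rw [h2, Finset.card_empty, Nat.le_zero, Finset.card_eq_zero] at h1
    have : i ∈ J.filter fun i => Disjoint (S i) Y := by simp [hi, hne]
    rw [h1] at this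
    simp at this
  obtain ⟨v, hv⟩ := hne
  have hvY : v ∈ Y := hS i hi hv
  have hcard : ∀ U : Finset V, Disjoint (S i) U →
      #((J.erase i).filter fun j => Disjoint (S j) U) + 1 =
        #(J.filter fun j => Disjoint (S j) U) := by
    intro U hU
    rw [Finset.filter_erase, Finset.card_erase_add_one]
    simp [hi, hU]
  have hcard_le : ∀ U : Finset V,
      #((J.erase i).filter fun j => Disjoint (S j) U) ≤
        #(J.filter fun j => Disjoint (S j) U) := by
    intro U
    exact Finset.card_le_card (Finset.filter_subset_filter _ (Finset.erase_subset _ _))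
  by_cases hA : ∀ U ⊆ Y, #(J.filter fun j => Disjoint (Function.update S i ((S i).erase v) j) U) ≤
      #(bdT G Y T U)
  · obtain ⟨C, hC1, hC2⟩ := ihm (∑ j ∈ J, #(Function.update S i ((S i).erase v) j)) (by
        rw [← hm]
        apply Finset.sum_lt_sum
        · intro j hj
          by_cases h : j = i
          · subst h; simpa using Finset.card_le_card (Finset.erase_subset _ _)
          · simp [h]
        · exact ⟨i, hi, by simpa using Finset.card_erase_lt_of_mem hv⟩)
      Y J (Function.update S i ((S i).erase v)) hY rfl (by
        intro j hj
        by_cases h : j = i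
        · subst h; simpa using (Finset.erase_subset _ _).trans (hS _ hi)
        · simpa [h] using hS j hj) hA
    refine ⟨C, fun j hj => ?_, hC2⟩
    obtain ⟨u, hu, rest⟩ := hC1 j hj
    refine ⟨u, ?_, rest⟩
    by_cases h : j = i
    · subst h
      simp only [Function.update_self] at hu
      exact Finset.mem_of_mem_erase hu
    · simpa [h] using hu
  push Not at hA
  obtain ⟨U1, hU1Y, hU1⟩ := hA
  have hfil : (J.erase i).filter (fun j => Disjoint (Function.update S i ((S i).erase v) j) U1) =
      (J.erase i).filter fun j => Disjoint (S j) U1 := by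
    apply Finset.filter_congr
    intro j hj
    simp [Finset.ne_of_mem_erase hj]
  have hd1 : Disjoint ((S i).erase v) U1 := by
    by_contra hd
    have : J.filter (fun j => Disjoint (Function.update S i ((S i).erase v) j) U1) =
        (J.erase i).filter fun j => Disjoint (S j) U1 := by
      rw [← hfil]
      exact (filter_erase_of_not (by simpa using hd)).symm
    rw [this] at hU1
    exact absurd (hcond U1 hU1Y) (not_le.2 (hU1.trans_le (hcard_le U1)))
  have ht1 : #(bdT G Y T U1) ≤ #((J.erase i).filter fun j => Disjoint (S j) U1) := by
    have : #(J.filter fun j => Disjoint (Function.update S i ((S i).erase v) j) U1) =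
        #((J.erase i).filter fun j => Disjoint (S j) U1) + 1 := by
      rw [← hfil, Finset.filter_erase, Finset.card_erase_add_one]
      simp [hi, hd1]
    omega
  -- Uncrossing with `U1`: sets avoiding `v` still leave room once path `i` starts at `v`.
  have cross : ∀ U2 ⊆ Y, v ∉ U2 →
      #((J.erase i).filter fun j => Disjoint (S j) U2) < #(bdT G Y T U2) := by
    intro U2 hU2Y hvU2
    by_contra hlt
    have ht2 := not_lt.1 hlt
    have hdis : Disjoint (S i) (U1 ∩ U2) := by
      rw [Finset.disjoint_left] at hd1 ⊢
      intro x hx hx'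
      rw [Finset.mem_inter] at hx'
      refine hd1 (Finset.mem_erase.2 ⟨?_, hx⟩) hx'.1
      rintro rfl
      exact hvU2 hx'.2
    have a1 := hcard _ hdis
    have a2 := hcond (U1 ∩ U2) (Finset.inter_subset_left.trans hU1Y)
    have a3 := hcond (U1 ∪ U2) (Finset.union_subset hU1Y hU2Y)
    have a4 := hcard_le (U1 ∪ U2)
    have a5 := missed_supermod (J.erase i) S U1 U2
    have a6 := bdT_submod (G := G) Y T U1 U2
    omega
  have hNlt : #(Y.erase v) < N := by rw [← hY]; exact Finset.card_erase_lt_of_mem hvY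
  by_cases hvT : v ∈ T
  · obtain ⟨C, hC1, hC2⟩ := ihN _ hNlt _ (Y.erase v) (J.erase i) (fun j => (S j).erase v) rfl rfl
      (fun j hj => Finset.erase_subset_erase _ (hS j (Finset.mem_of_mem_erase hj))) (by
        intro U hU
        have hvU : v ∉ U := fun h => by simpa using hU h
        have := cross U (hU.trans (Finset.erase_subset _ _)) hvU
        have e1 : bdT G (Y.erase v) T U = (bdT G Y T U).erase v := by
          ext x; simp only [mem_bdT, Finset.mem_erase]; tauto
        have e2 : (J.erase i).filter (fun j => Disjoint ((S j).erase v) U) =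
            (J.erase i).filter fun j => Disjoint (S j) U := by
          apply Finset.filter_congr
          intro j _
          simp only [Finset.disjoint_left, Finset.mem_erase]
          constructor
          · intro h x hx hxU
            exact h ⟨fun e => hvU (e ▸ hxU), hx⟩ hxU
          · intro h x hx
            exact h hx.2
        rw [e1, e2, Finset.card_erase_of_mem]
        · omega
        · rw [mem_bdT]; tauto)
    refine ⟨Function.update C i {v}, fun j hj => ?_, ?_⟩
    · by_cases h : j = i
      · subst h
        refine ⟨v, hv, v, hvT, Walk.nil, by simp, ?_, ?_, by simp⟩
        · ext; simp
        · simpa using hvY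
      · obtain ⟨u, hu, w, hw, p, hp, hp1, hp2, hp3⟩ := hC1 j (Finset.mem_erase.2 ⟨h, hj⟩)
        refine ⟨u, Finset.mem_of_mem_erase hu, w, hw, p, hp, by simpa [h] using hp1, ?_, hp3⟩
        simp only [ne_eq, h, not_false_eq_true, Function.update_of_ne]
        exact hp2.trans (by simp)
    · have key : ∀ j ∈ J, j ≠ i → v ∉ C j := by
        intro j hj h hvj
        obtain ⟨u, hu, w, hw, p, hp, hp1, hp2, hp3⟩ := hC1 j (Finset.mem_erase.2 ⟨h, hj⟩)
        simpa using hp2 hvj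
      intro j hj l hl hjl
      by_cases h : j = i
      · subst h
        simp only [Function.update_self, ne_eq, hjl.symm, not_false_eq_true,
          Function.update_of_ne, Set.disjoint_singleton_left]
        exact key l hl hjl.symm
      · by_cases h' : l = i
        · subst h'
          simp only [Function.update_self, ne_eq, hjl, not_false_eq_true,
            Function.update_of_ne, Set.disjoint_singleton_right]
          exact key j hj hjl
        · simp only [ne_eq, h, not_false_eq_true, Function.update_of_ne, h']
          exact hC2 j (Finset.mem_erase.2 ⟨h, hj⟩) l (Finset.mem_erase.2 ⟨h', hl⟩) hjl
  · obtain ⟨C, hC1, hC2⟩ := ihN _ hNlt _ (Y.erase v) J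
      (fun j => if j = i then (Y.erase v).filter (G.Adj v) else (S j).erase v) rfl rfl
      (fun j hj => by
        by_cases h : j = i
        · simp only [h, if_true]; exact Finset.filter_subset _ _
        · simp only [h, if_false]; exact Finset.erase_subset_erase _ (hS j hj)) (by
        intro U hU
        have hvU : v ∉ U := fun h => by simpa using hU h
        have := cross U (hU.trans (Finset.erase_subset _ _)) hvU
        have e1 : bdT G (Y.erase v) T U = (bdT G Y T U).erase v := by
          ext x; simp only [mem_bdT, Finset.mem_erase]; tauto
        have e2 : (J.erase i).filter (fun j => Disjoint (if j = i then (Y.erase v).filter (G.Adj v)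
              else (S j).erase v) U) =
            (J.erase i).filter fun j => Disjoint (S j) U := by
          apply Finset.filter_congr
          intro j hj
          simp only [Finset.ne_of_mem_erase hj, if_false, Finset.disjoint_left, Finset.mem_erase]
          constructor
          · intro h x hx hxU
            exact h ⟨fun e => hvU (e ▸ hxU), hx⟩ hxU
          · intro h x hx
            exact h hx.2
        by_cases hN : Disjoint ((Y.erase v).filter (G.Adj v)) U
        · have e3 : v ∉ bdT G Y T U := by
            rw [mem_bdT]
            rintro ⟨-, -, h | ⟨u, hu, h⟩⟩
            · exact hvT h
            · exact Finset.disjoint_left.1 hN (Finset.mem_filter.2 ⟨hU hu, h.symm⟩) hu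
          rw [e1, Finset.erase_eq_of_notMem e3]
          have : #(J.filter (fun j => Disjoint (if j = i then (Y.erase v).filter (G.Adj v)
              else (S j).erase v) U)) = #((J.erase i).filter fun j => Disjoint (S j) U) + 1 := by
            rw [← e2]
            exact (card_filter_erase hi (by simpa only [if_true] using hN)).symm
          omega
        · have e3 : v ∈ bdT G Y T U := by
            rw [Finset.not_disjoint_iff] at hN
            obtain ⟨u, hu, hu'⟩ := hN
            rw [mem_bdT]
            exact ⟨hvY, hvU, Or.inr ⟨u, hu', (Finset.mem_filter.1 hu).2.symm⟩⟩
          have : #(J.filter (fun j => Disjoint (if j = i then (Y.erase v).filter (G.Adj v)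
              else (S j).erase v) U)) = #((J.erase i).filter fun j => Disjoint (S j) U) := by
            rw [← e2]
            refine congrArg _ (filter_erase_of_not ?_).symm
            simpa only [if_true] using hN
          rw [e1, Finset.card_erase_of_mem e3]
          omega)
    obtain ⟨u, hu, w, hw, p, hp, hp1, hp2, hp3⟩ := hC1 i hi
    simp only [if_true, Finset.mem_filter] at hu
    have hvC : ∀ j ∈ J, v ∉ C j := by
      intro j hj hvj
      obtain ⟨u, hu, w, hw, p, hp, hp1, hp2, hp3⟩ := hC1 j hj
      simpa using hp2 hvj
    refine ⟨Function.update C i (insert v (C i)), fun j hj => ?_, ?_⟩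
    · by_cases h : j = i
      · subst h
        refine ⟨v, hv, w, hw, Walk.cons hu.2 p, ?_, ?_, ?_, ?_⟩
        · rw [Walk.cons_isPath_iff]
          refine ⟨hp, fun h => hvC j hi ?_⟩
          rw [hp1]; exact h
        · simp only [Function.update_self]
          rw [hp1]; ext z; simp
        · simp only [Function.update_self]
          apply Set.insert_subset hvY
          exact hp2.trans (by simp)
        · intro z hz hzT
          simp only [Walk.support_cons, List.mem_cons] at hz
          rcases hz with rfl | hz
          · exact absurd hzT hvT
          · exact hp3 z hz hzT
      · obtain ⟨u, hu, w, hw, p, hp, hp1, hp2, hp3⟩ := hC1 j hj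
        simp only [h, if_false] at hu
        refine ⟨u, Finset.mem_of_mem_erase hu, w, hw, p, hp, by simpa [h] using hp1, ?_, hp3⟩
        simp only [ne_eq, h, not_false_eq_true, Function.update_of_ne]
        exact hp2.trans (by simp)
    · intro j hj l hl hjl
      by_cases h : j = i
      · subst h
        simp only [Function.update_self, ne_eq, hjl.symm, not_false_eq_true,
          Function.update_of_ne, Set.disjoint_insert_left]
        exact ⟨hvC l hl, hC2 j hj l hl hjl⟩
      · by_cases h' : l = i
        · subst h'
          simp only [Function.update_self, ne_eq, hjl, not_false_eq_true,
            Function.update_of_ne, Set.disjoint_insert_right]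
          exact ⟨hvC j hj, hC2 j hj l hl hjl⟩
        · simp only [ne_eq, h, not_false_eq_true, Function.update_of_ne, h']
          exact hC2 j hj l hl hjl

end Menger

end

/-! ### Havens and free sets -/

section
variable {V : Type} {G : SimpleGraph V} {A B : Set V}
variable [Fintype V]

/-- The vertex boundary of `U`: the vertices outside `U` with a neighbour in `U`. -/
noncomputable def bd (G : SimpleGraph V) (U : Finset V) : Finset V := bdT G Finset.univ ∅ U

lemma mem_bd {U : Finset V} {v : V} : v ∈ bd G U ↔ v ∉ U ∧ ∃ u ∈ U, G.Adj u v := by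
  simp [bd, mem_bdT]

lemma bd_submod (U W : Finset V) :
    #(bd G (U ∪ W)) + #(bd G (U ∩ W)) ≤ #(bd G U) + #(bd G W) := bdT_submod _ _ _ _

/-- No `t` vertices meet all `A`-`A`-`B`-paths, and no separation of order at most `t` has
`A`-`A`-`B`-paths strictly on both sides. Hence each separation of small order has a distinguished
side, the one that contains an `A`-`A`-`B`-path. -/
structure Haven (G : SimpleGraph V) (A B : Set V) (t : ℕ) : Prop where
  big : ∀ X : Finset V, #X ≤ t → AAB G A B {v | v ∉ X}
  tangle : ∀ U : Finset V, #(bd G U) ≤ t → AAB G A B {v | v ∈ U} →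
    ¬ AAB G A B {v | v ∉ U ∧ v ∉ bd G U}

lemma Haven.trip {t : ℕ} (H : Haven G A B t) (X : Finset V) (hX : #X ≤ t) :
    ∃ a D E, Trip G A B a D E ∧ ∀ x ∈ insert a (D ∪ E), x ∉ X := by
  obtain ⟨a, D, E, h1, h2⟩ := H.big X hX
  exact ⟨a, D, E, h1, fun x hx => h2 hx⟩

/-- If `U` is the distinguished side of its boundary, every trip avoiding the boundary lies in `U`. -/
lemma Haven.sub {t : ℕ} (H : Haven G A B t) {U : Finset V} (hU : AAB G A B {v | v ∈ U})
    (ht : #(bd G U) ≤ t) {a : V} {D E : Set V} (hT : Trip G A B a D E)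
    (hd : ∀ x ∈ insert a (D ∪ E), x ∉ bd G U) : ∀ x ∈ insert a (D ∪ E), x ∈ U := by
  by_contra hcon
  refine H.tangle U ht hU (hT.aab.mono ?_)
  intro x hx
  refine ⟨fun hxU => hcon fun y hy => ?_, hd x hx⟩
  refine hT.fork.conn.closed (L := {v | v ∈ U}) (fun u hu huU w hw h => ?_) hx hxU hy
  by_contra hwU
  exact hd w hw (mem_bd.2 ⟨hwU, u, huU, h⟩)

lemma Haven.inter {t : ℕ} (H : Haven G A B t) {U W : Finset V} (hU : AAB G A B {v | v ∈ U})
    (hW : AAB G A B {v | v ∈ W}) (ht : #(bd G U) + #(bd G W) ≤ t) :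
    AAB G A B {v | v ∈ U ∩ W} := by
  obtain ⟨a, D, E, hT, hX⟩ := H.trip (bd G U ∪ bd G W) ((Finset.card_union_le _ _).trans ht)
  refine ⟨a, D, E, hT, fun x hx => Finset.mem_inter.2 ⟨H.sub hU (by omega) hT ?_ x hx,
    H.sub hW (by omega) hT ?_ x hx⟩⟩
  · exact fun y hy h => hX y hy (Finset.mem_union_left _ h)
  · exact fun y hy h => hX y hy (Finset.mem_union_right _ h)

/-- `Z` is free: every set `U` containing an `A`-`A`-`B`-path has at least as many boundary
vertices as `Z` has vertices outside `U`. -/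
def Free (G : SimpleGraph V) (A B : Set V) (Z : Finset V) : Prop :=
  ∀ U : Finset V, AAB G A B {v | v ∈ U} → #(Z \ U) ≤ #(bd G U)

lemma Free.mono {Z Z' : Finset V} (h : Free G A B Z) (hZ : Z' ⊆ Z) : Free G A B Z' :=
  fun U hU => (Finset.card_le_card (Finset.sdiff_subset_sdiff hZ subset_rfl)).trans (h U hU)

lemma bd_univ : bd G (Finset.univ : Finset V) = ∅ := by
  ext v; simp [mem_bd]

lemma Haven.univ {t : ℕ} (H : Haven G A B t) :
    AAB G A B {v | v ∈ (Finset.univ : Finset V)} :=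
  (H.big ∅ (by simp)).mono (by simp)

/-- Either `Z` contains a free set of size `m`, or `2 * m` vertices meet every trip that
meets `Z`. The second outcome comes from a maximal free subset `Z'` of `Z` and the smallest tight
set `U`: by uncrossing, a vertex of `U ∩ Z` outside `Z'` could be added to `Z'`. -/
lemma Haven.exists_free {t : ℕ} (H : Haven G A B t) (Z : Finset V) (m : ℕ) (ht : 2 * m ≤ t) :
    (∃ Z' ⊆ Z, #Z' = m ∧ Free G A B Z') ∨
    ∃ X : Finset V, #X ≤ 2 * m ∧ ∀ a D E, Trip G A B a D E →
      (∀ x ∈ insert a (D ∪ E), x ∉ X) → ∀ x ∈ insert a (D ∪ E), x ∉ Z := by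
  obtain ⟨Z', hZ', hmax⟩ := Finset.exists_max_image
    (Z.powerset.filter fun Z' => Free G A B Z' ∧ #Z' ≤ m) (fun Z' => #Z')
    ⟨∅, Finset.mem_filter.2 ⟨by simp, fun U _ => by simp, by simp⟩⟩
  simp only [Finset.mem_filter, Finset.mem_powerset] at hZ' hmax
  obtain ⟨hZZ, hfree, hcard⟩ := hZ'
  rcases hcard.eq_or_lt with hm | hm
  · exact Or.inl ⟨Z', hZZ, hm, hfree⟩
  right
  obtain ⟨U, hU, hmin⟩ := Finset.exists_min_image
    (Finset.univ.filter fun U : Finset V => AAB G A B {v | v ∈ U} ∧ #(bd G U) = #(Z' \ U))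
    (fun U => #U) ⟨Finset.univ, Finset.mem_filter.2 ⟨by simp, H.univ, by
      rw [bd_univ, Finset.sdiff_eq_empty_iff_subset.2 (Finset.subset_univ _)]⟩⟩
  simp only [Finset.mem_filter, Finset.mem_univ, true_and] at hU hmin
  obtain ⟨hUA, hUt⟩ := hU
  have le : ∀ U, #(Z' \ U) ≤ #Z' := fun U => Finset.card_le_card Finset.sdiff_subset
  have hUle := le U
  refine ⟨bd G U ∪ Z', (Finset.card_union_le _ _).trans (by omega), ?_⟩
  intro a D E hT hX x hx hxZ
  have hxU := H.sub hUA (by omega) hT (fun y hy h => hX y hy (by simp [h])) x hx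
  have hxZ' : x ∉ Z' := fun h => hX x hx (by simp [h])
  have hnot : ¬ Free G A B (insert x Z') := by
    intro h
    have := hmax (insert x Z') ⟨Finset.insert_subset hxZ hZZ, h, by
      rw [Finset.card_insert_of_notMem hxZ']; omega⟩
    rw [Finset.card_insert_of_notMem hxZ'] at this
    omega
  simp only [Free, not_forall, not_le] at hnot
  obtain ⟨W, hWA, hW⟩ := hnot
  have hWle := le W
  have h1 := hfree W hWA
  have hxW : x ∉ W := by
    intro h
    rw [Finset.insert_sdiff_of_mem _ h] at hW
    omega
  rw [Finset.insert_sdiff_of_notMem _ hxW, Finset.card_insert_of_notMem (by simp [hxZ'])] at hW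
  have hI := H.inter hUA hWA (by omega)
  have h2 := hfree _ hI
  have h3 := hfree (U ∪ W) (hUA.mono fun y hy => Finset.mem_union_left _ hy)
  have h4 := bd_submod (G := G) U W
  have h5 := sdiff_supermod Z' U W
  have h6 := hmin (U ∩ W) ⟨hI, by omega⟩
  have := Finset.eq_of_subset_of_card_le Finset.inter_subset_left h6
  rw [← this] at hxU
  exact hxW (Finset.mem_inter.1 hxU).2

/-- Two free sets are linked by disjoint paths: a separator violating the condition of Menger's
theorem would have its distinguished side away from one of the two sets. -/
lemma Haven.link {t : ℕ} (H : Haven G A B t) {F1 F2 : Finset V} (h1 : Free G A B F1)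
    (h2 : Free G A B F2) (hle : #F1 ≤ #F2) (ht : #F1 ≤ t) :
    ∃ C : V → Set V, (∀ x ∈ F1, ∃ w ∈ F2, ∃ p : G.Walk x w, p.IsPath ∧
      C x = {z | z ∈ p.support} ∧ ∀ z ∈ p.support, z ∈ F2 → z = w) ∧
      ∀ x ∈ F1, ∀ y ∈ F1, x ≠ y → Disjoint (C x) (C y) := by
  obtain ⟨C, hC, hC'⟩ := menger G F2 _ _ Finset.univ F1 (fun x => {x}) rfl rfl (by simp) (by
    intro U _
    by_contra hlt
    rw [not_le] at hlt
    have e : (F1.filter fun i => Disjoint {i} U) = F1 \ U := by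
      ext x; simp
    rw [e] at hlt
    have hsub : bd G U ⊆ bdT G Finset.univ F2 U := by
      intro v; rw [mem_bd, mem_bdT]; simp; tauto
    have hc := Finset.card_le_card hsub
    have hc1 : #(F1 \ U) ≤ #F1 := Finset.card_le_card Finset.sdiff_subset
    have hUA : ¬ AAB G A B {v | v ∈ U} := fun h => by have := h1 U h; omega
    obtain ⟨a, D, E, hT, hX⟩ := H.trip (bdT G Finset.univ F2 U) (by omega)
    set W : Finset V := Finset.univ.filter fun v => v ∉ U ∧ v ∉ bd G U with hW
    have hWA : AAB G A B {v | v ∈ W} := by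
      refine hT.aab.mono fun x hx => ?_
      simp only [hW, Finset.mem_filter, Finset.mem_univ, true_and, Set.mem_ofPred_eq]
      refine ⟨fun hxU => hUA (hT.aab.mono ?_), fun h => hX x hx (hsub h)⟩
      refine hT.fork.conn.closed (L := {v | v ∈ U}) (fun u hu huU w hw h => ?_) hx hxU
      by_contra hwU
      exact hX w hw (hsub (mem_bd.2 ⟨hwU, u, huU, h⟩))
    have hbW : bd G W ⊆ bd G U := by
      intro v hv
      rw [mem_bd] at hv
      obtain ⟨hv, w, hw, h⟩ := hv
      simp only [hW, Finset.mem_filter, Finset.mem_univ, true_and] at hv hw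
      by_contra hvb
      have hvU : v ∈ U := by tauto
      exact hw.2 (mem_bd.2 ⟨hw.1, v, hvU, h.symm⟩)
    have a1 := h2 W hWA
    have a2 := Finset.card_le_card hbW
    have a3 := Finset.card_sdiff_add_card_inter F2 W
    have a4 : #(bd G U ∪ F2 ∩ W) = #(bd G U) + #(F2 ∩ W) := by
      apply Finset.card_union_of_disjoint
      rw [Finset.disjoint_left]
      intro x hx hx'
      simp only [hW, Finset.mem_inter, Finset.mem_filter] at hx'
      exact hx'.2.2.2 hx
    have a5 : #(bd G U ∪ F2 ∩ W) ≤ #(bdT G Finset.univ F2 U) := by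
      apply Finset.card_le_card
      refine Finset.union_subset hsub fun x hx => ?_
      simp only [hW, Finset.mem_inter, Finset.mem_filter] at hx
      rw [mem_bdT]
      simp only [Finset.mem_univ]
      tauto
    omega)
  refine ⟨C, fun x hx => ?_, hC'⟩
  obtain ⟨u, hu, w, hw, p, hp, hp1, hp2, hp3⟩ := hC x hx
  rw [Finset.mem_singleton] at hu
  subst hu
  exact ⟨w, hw, p, hp, hp1, hp3⟩

end

/-! ### Doubly free sets and lobes -/

section
variable {V : Type} {G : SimpleGraph V} {A B : Set V}
variable [Fintype V]

/-- The number of paths demanded from `Z` into `U` when every vertex of `Z` starts two paths that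
are disjoint except in that vertex. A vertex of `Z` in the boundary of `U` counts once, since it
is itself a boundary vertex; a vertex further away counts twice. -/
noncomputable def defect (G : SimpleGraph V) (Z U : Finset V) : ℕ :=
  #(Z \ U) + #(Z \ (U ∪ bd G U))

/-- `Z` is doubly free: two paths can be sent from each vertex of `Z` into any side that contains
an `A`-`A`-`B`-path, as far as counting is concerned. -/
def Free2 (G : SimpleGraph V) (A B : Set V) (Z : Finset V) : Prop :=
  ∀ U : Finset V, AAB G A B {v | v ∈ U} → defect G Z U ≤ #(bd G U)

lemma nbhd_mono {U W : Finset V} (h : U ⊆ W) : U ∪ bd G U ⊆ W ∪ bd G W := by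
  intro x hx
  rw [Finset.mem_union] at hx ⊢
  by_cases hxW : x ∈ W
  · exact Or.inl hxW
  · rcases hx with hx | hx
    · exact absurd (h hx) hxW
    · obtain ⟨-, u, hu, hux⟩ := mem_bd.1 hx
      exact Or.inr (mem_bd.2 ⟨hxW, u, h hu, hux⟩)

lemma defect_supermod (Z U W : Finset V) :
    defect G Z U + defect G Z W ≤ defect G Z (U ∪ W) + defect G Z (U ∩ W) := by
  have h1 := sdiff_supermod Z U W
  have h2 : #(Z \ (U ∪ bd G U)) + #(Z \ (W ∪ bd G W)) ≤
      #(Z \ ((U ∪ W) ∪ bd G (U ∪ W))) + #(Z \ ((U ∩ W) ∪ bd G (U ∩ W))) := by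
    have i1 := nbhd_mono (G := G) (Finset.inter_subset_left : U ∩ W ⊆ U)
    have i2 := nbhd_mono (G := G) (Finset.inter_subset_right : U ∩ W ⊆ W)
    have i3 : (U ∪ W) ∪ bd G (U ∪ W) ⊆ (U ∪ bd G U) ∪ (W ∪ bd G W) := by
      intro x hx
      simp only [Finset.mem_union, mem_bd] at hx ⊢
      rcases hx with hx | ⟨hx, u, hu | hu, h⟩
      · tauto
      · exact Or.inl (Or.inr ⟨by tauto, u, hu, h⟩)
      · exact Or.inr (Or.inr ⟨by tauto, u, hu, h⟩)
    rw [add_comm (#(Z \ ((U ∪ W) ∪ bd G (U ∪ W))))]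
    apply card_submod
    · intro x hx
      simp only [Finset.mem_union (s := _ \ _), Finset.mem_sdiff] at hx ⊢
      rcases hx with hx | hx
      · exact Or.inl ⟨hx.1, fun h => hx.2 (i1 h)⟩
      · exact Or.inl ⟨hx.1, fun h => hx.2 (i2 h)⟩
    · intro x hx
      simp only [Finset.mem_inter (s₁ := _ \ _), Finset.mem_sdiff] at hx ⊢
      refine ⟨⟨hx.1.1, fun h => hx.1.2 (i1 h)⟩, hx.1.1, fun h => ?_⟩
      have := i3 h
      rw [Finset.mem_union] at this
      exact this.elim hx.1.2 hx.2.2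
  unfold defect
  omega

lemma defect_anti (Z : Finset V) {U W : Finset V} (h : U ⊆ W) : defect G Z W ≤ defect G Z U :=
  add_le_add (Finset.card_le_card (Finset.sdiff_subset_sdiff subset_rfl h))
    (Finset.card_le_card (Finset.sdiff_subset_sdiff subset_rfl (nbhd_mono h)))

lemma defect_le (Z U : Finset V) : defect G Z U ≤ 2 * #Z := by
  have h1 : #(Z \ U) ≤ #Z := Finset.card_le_card Finset.sdiff_subset
  have h2 : #(Z \ (U ∪ bd G U)) ≤ #Z := Finset.card_le_card Finset.sdiff_subset
  unfold defect
  omega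

lemma Free2.free {Z : Finset V} (h : Free2 G A B Z) : Free G A B Z := by
  intro U hU
  have := h U hU
  unfold defect at this
  omega

/-- After deletion of `X`, the pairs `(c, S)` with `L c S` are disjoint lobes: `S` is attached to
the rest of the graph only through the cut vertex `c`. No lobe contains an `A`-`A`-`B`-path, but the
interior vertex `a` of every trip avoiding `X` lies in a lobe. -/
structure Lobes (G : SimpleGraph V) (A B : Set V) (X : Finset V) (L : V → Set V → Prop) :
    Prop where
  notMem : ∀ c S, L c S → c ∉ S
  nbr : ∀ c S, L c S → ∀ x ∈ S, ∀ y ∉ S, G.Adj x y → y = c ∨ y ∈ X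
  uniq : ∀ c S c' S', L c S → L c' S' → ∀ x ∈ insert c S, x ∈ insert c' S' → c = c' ∧ S = S'
  cover : ∀ a D E, Trip G A B a D E → (∀ x ∈ insert a (D ∪ E), x ∉ X) → ∃ c S, L c S ∧ a ∈ S
  small : ∀ c S, L c S → ¬ AAB G A B S

/-- Either there is a doubly free set of `n` vertices of `A`, or boundedly many vertices leave the
interior vertex of each remaining trip in a lobe.

Take a maximal doubly free `Z ⊆ A`, of size less than `n`, and the smallest tight set `U0`. A vertex
`a ∈ A ∩ U0` outside `Z` cannot be added, so there is a proper subset `W` of `U0` with boundary only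
one larger than its defect and with `a` outside `W` and its boundary. Any two minimal sets `W` of
this kind have union `U0`, so their complements in `U0` are disjoint. If `W` agrees with `U0` on `Z`
and on the boundary of `U0`, then `W` has exactly one new boundary vertex `c`, and the rest of
`U0 \ W` is a lobe at `c`. The other sets `W` are few, and `X` contains their boundaries. -/
lemma Haven.free2_or_lobes {t : ℕ} (H : Haven G A B t) (n : ℕ) (ht : 4 * n ≤ t) :
    (∃ Z : Finset V, (∀ z ∈ Z, z ∈ A) ∧ #Z = n ∧ Free2 G A B Z) ∨
    ∃ (X : Finset V) (L : V → Set V → Prop), #X ≤ 3 * n + 3 * n * (2 * n + 1) ∧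
      Lobes G A B X L := by
  obtain ⟨Z, hZ, hmax⟩ := Finset.exists_max_image
    (Finset.univ.filter fun Z : Finset V => (∀ z ∈ Z, z ∈ A) ∧ Free2 G A B Z ∧ #Z ≤ n)
    (fun Z => #Z)
    ⟨∅, Finset.mem_filter.2 ⟨by simp, by simp, fun U _ => by simp [defect], by simp⟩⟩
  simp only [Finset.mem_filter, Finset.mem_univ, true_and] at hZ hmax
  obtain ⟨hZA, hfree, hcard⟩ := hZ
  rcases hcard.eq_or_lt with hm | hm
  · exact Or.inl ⟨Z, hZA, hm, hfree⟩
  right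
  obtain ⟨U0, hU, hmin⟩ := Finset.exists_min_image
    (Finset.univ.filter fun U : Finset V => AAB G A B {v | v ∈ U} ∧ #(bd G U) = defect G Z U)
    (fun U => #U) ⟨Finset.univ, Finset.mem_filter.2 ⟨by simp, H.univ, by
      rw [defect, bd_univ, Finset.union_empty,
        Finset.sdiff_eq_empty_iff_subset.2 (Finset.subset_univ _)]
      simp⟩⟩
  simp only [Finset.mem_filter, Finset.mem_univ, true_and] at hU hmin
  obtain ⟨hUA, hUt⟩ := hU
  have le := defect_le (G := G) Z
  have hU0le := le U0
  -- no proper subset of `U0` is tight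
  have notTight : ∀ W ⊆ U0, W ≠ U0 → AAB G A B {v | v ∈ W} → defect G Z W < #(bd G W) := by
    intro W hW hne hWA
    refine lt_of_le_of_ne (hfree W hWA) fun h => hne ?_
    exact Finset.eq_of_subset_of_card_le hW (hmin W ⟨hWA, h.symm⟩)
  -- `P`: proper subsets of `U0` whose boundary exceeds the defect by one; `Q`: the minimal ones among them.
  let P : Finset V → Prop := fun W => W ⊆ U0 ∧ W ≠ U0 ∧ AAB G A B {v | v ∈ W} ∧
    #(bd G W) = defect G Z W + 1
  let Q : Finset V → Prop := fun W => P W ∧ ∀ W' ⊆ W, P W' → W' = W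
  have exP : ∀ a ∈ A, a ∈ U0 → a ∉ Z → ∃ W, P W ∧ a ∉ W ∪ bd G W := by
    intro a haA haU haZ
    have hnot : ¬ Free2 G A B (insert a Z) := by
      intro h
      have := hmax (insert a Z) ⟨by simpa using ⟨haA, hZA⟩, h, by
        rw [Finset.card_insert_of_notMem haZ]; omega⟩
      rw [Finset.card_insert_of_notMem haZ] at this
      omega
    simp only [Free2, not_forall, not_le] at hnot
    obtain ⟨W, hWA, hW⟩ := hnot
    have hWle := le W
    have h1 := hfree W hWA
    have hsd : ∀ W' : Finset V, a ∈ W' → insert a Z \ W' = Z \ W' := fun W' h =>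
      Finset.insert_sdiff_of_mem _ h
    have hsd' : ∀ W' : Finset V, a ∉ W' → #(insert a Z \ W') = #(Z \ W') + 1 := fun W' h => by
      rw [Finset.insert_sdiff_of_notMem _ h, Finset.card_insert_of_notMem (by simp [haZ])]
    have haW : a ∉ W := by
      intro h
      have : defect G (insert a Z) W = defect G Z W := by
        rw [defect, defect, hsd _ h, hsd _ (Finset.mem_union_left _ h)]
      omega
    have hdle : #(bd G W) ≤ defect G Z W + 1 := by
      have : defect G (insert a Z) W ≤ defect G Z W + 2 := by
        by_cases h : a ∈ W ∪ bd G W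
        · rw [defect, defect, hsd' _ haW, hsd _ h]; omega
        · rw [defect, defect, hsd' _ haW, hsd' _ h]; omega
      omega
    have hI := H.inter hUA hWA (by omega)
    have h2 := hfree _ hI
    have h3 := hfree (U0 ∪ W) (hUA.mono fun y hy => Finset.mem_union_left _ hy)
    have h4 := bd_submod (G := G) U0 W
    have h5 := defect_supermod (G := G) Z U0 W
    have hne : U0 ∩ W ≠ U0 := fun h => haW (by
      rw [← h] at haU; exact (Finset.mem_inter.1 haU).2)
    have h6 := notTight _ Finset.inter_subset_left hne hI
    have haN : a ∉ W ∪ bd G W := by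
      intro h
      have : defect G (insert a Z) W = defect G Z W + 1 := by
        rw [defect, defect, hsd' _ haW, hsd _ h]; omega
      omega
    refine ⟨U0 ∩ W, ⟨Finset.inter_subset_left, hne, hI, by omega⟩, fun h => haN ?_⟩
    exact nbhd_mono Finset.inter_subset_right h
  have exQ : ∀ a ∈ A, a ∈ U0 → a ∉ Z → ∃ W, Q W ∧ a ∉ W ∪ bd G W := by
    intro a haA haU haZ
    obtain ⟨W, hW, haW⟩ := exP a haA haU haZ
    obtain ⟨W', hW', hmin'⟩ := Finset.exists_min_image
      (Finset.univ.filter fun W' : Finset V => P W' ∧ W' ⊆ W) (fun W => #W)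
      ⟨W, by simp [hW]⟩
    simp only [Finset.mem_filter, Finset.mem_univ, true_and] at hW' hmin'
    refine ⟨W', ⟨hW'.1, fun W'' h h' => ?_⟩, fun h => haW (nbhd_mono hW'.2 h)⟩
    exact Finset.eq_of_subset_of_card_le h (hmin' W'' ⟨h', h.trans hW'.2⟩)
  have dP : ∀ W, P W → #(bd G W) ≤ 2 * n := fun W hW => by
    have := le W
    have := hW.2.2.2
    omega
  have cover : ∀ W W', Q W → Q W' → W ≠ W' → W ∪ W' = U0 := by
    intro W W' hW hW' hne
    have b1 := le W
    have b2 := le W'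
    have e1 := hW.1.2.2.2
    have e2 := hW'.1.2.2.2
    have hI := H.inter hW.1.2.2.1 hW'.1.2.2.1 (by omega)
    have hIU : W ∩ W' ⊆ U0 := Finset.inter_subset_left.trans hW.1.1
    have hIne : W ∩ W' ≠ U0 := by
      intro h
      refine hW.1.2.1 (hW.1.1.antisymm ?_)
      rw [← h]; exact Finset.inter_subset_left
    have h1 := notTight _ hIU hIne hI
    have h2 : #(bd G (W ∩ W')) ≠ defect G Z (W ∩ W') + 1 := by
      intro h
      have hP : P (W ∩ W') := ⟨hIU, hIne, hI, h⟩
      exact hne ((hW.2 _ Finset.inter_subset_left hP).symm.trans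
        (hW'.2 _ Finset.inter_subset_right hP))
    have h4 := bd_submod (G := G) W W'
    have h5 := defect_supermod (G := G) Z W W'
    by_contra hUne
    have h6 := notTight (W ∪ W') (Finset.union_subset hW.1.1 hW'.1.1) hUne
      (hW.1.2.2.1.mono fun y hy => Finset.mem_union_left _ hy)
    omega
  -- `Bad W y`: the vertex `y` witnesses that `W` differs from `U0` on `Z` or on the boundary of `U0`.
  -- Each `y` is a witness for at most one `W`, because the sets `U0 \ W` are disjoint.
  let Bad : Finset V → V → Prop := fun W y =>
    (y ∈ Z ∧ y ∈ U0 ∧ y ∉ W) ∨ (y ∈ bd G U0 ∧ y ∉ bd G W)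
  have badUniq : ∀ y W W', Q W → Q W' → Bad W y → Bad W' y → W = W' := by
    intro y W W' hW hW' hb hb'
    by_contra hne
    have hc := cover W W' hW hW' hne
    have key : ∀ x, x ∈ U0 ↔ x ∈ W ∨ x ∈ W' := fun x => by rw [← hc, Finset.mem_union]
    have hnot : y ∈ bd G U0 → y ∉ U0 := fun h => (mem_bd.1 h).1
    rcases hb with ⟨-, h1, h2⟩ | ⟨h1, h2⟩
    · rcases hb' with ⟨-, -, h4⟩ | ⟨h3, -⟩
      · have := (key y).1 h1; tauto
      · exact hnot h3 h1
    · rcases hb' with ⟨-, h3, -⟩ | ⟨-, h4⟩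
      · exact hnot h1 h3
      · obtain ⟨h5, u, hu, huy⟩ := mem_bd.1 h1
        rw [key] at hu h5
        rcases hu with hu | hu
        · exact h2 (mem_bd.2 ⟨by tauto, u, hu, huy⟩)
        · exact h4 (mem_bd.2 ⟨by tauto, u, hu, huy⟩)
  have exf : ∀ y, ∃ W, #(bd G W) ≤ 2 * n ∧ ∀ W', Q W' → Bad W' y → W' = W := by
    intro y
    by_cases h : ∃ W, Q W ∧ Bad W y
    · obtain ⟨W, hW, hb⟩ := h
      exact ⟨W, dP W hW.1, fun W' hW' hb' => badUniq y W' W hW' hW hb' hb⟩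
    · exact ⟨U0, by omega, fun W' hW' hb' => absurd ⟨W', hW', hb'⟩ h⟩
  choose f hf1 hf2 using exf
  have cU : ∀ W c, P W → bd G W \ bd G U0 = {c} → c ∈ U0 ∧ c ∉ W := by
    intro W c hW hc
    have : c ∈ bd G W \ bd G U0 := by simp [hc]
    rw [Finset.mem_sdiff] at this
    obtain ⟨h1, u, hu, huc⟩ := mem_bd.1 this.1
    refine ⟨by_contra fun h => this.2 (mem_bd.2 ⟨h, u, hW.1 hu, huc⟩), h1⟩
  have bW : ∀ W c x, bd G W \ bd G U0 = {c} → x ∈ U0 → x ∈ bd G W → x = c := by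
    intro W c x hc hx hxW
    have : x ∈ bd G W \ bd G U0 := Finset.mem_sdiff.2 ⟨hxW, fun h => (mem_bd.1 h).1 hx⟩
    rw [hc] at this
    simpa using this
  refine ⟨(Z ∪ bd G U0) ∪ (Z ∪ bd G U0).biUnion fun y => bd G (f y),
    fun c S => ∃ W, Q W ∧ bd G W \ bd G U0 = {c} ∧ S = {x | x ∈ U0 ∧ x ∉ W ∧ x ≠ c}, ?_, ?_⟩
  · have c1 : #(Z ∪ bd G U0) ≤ 3 * n := (Finset.card_union_le _ _).trans (by omega)
    refine (Finset.card_union_le _ _).trans (add_le_add c1 ?_)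
    refine (Finset.card_biUnion_le_card_mul _ _ (2 * n + 1) fun y _ => ?_).trans
      (Nat.mul_le_mul_right _ c1)
    have := hf1 y
    omega
  · constructor
    · rintro c S ⟨W, hW, hc, rfl⟩ h
      exact h.2.2 rfl
    · rintro c S ⟨W, hW, hc, rfl⟩ x ⟨hxU, hxW, hxc⟩ y hy hxy
      by_cases hyU : y ∈ U0
      · left
        by_contra hyc
        have hyW : y ∈ W := by
          by_contra h
          exact hy ⟨hyU, h, hyc⟩
        exact hxc (bW W c x hc hxU (mem_bd.2 ⟨hxW, y, hyW, hxy.symm⟩))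
      · right
        exact Finset.mem_union_left _ (Finset.mem_union_right _ (mem_bd.2 ⟨hyU, x, hxU, hxy⟩))
    · rintro c S c' S' ⟨W, hW, hc, rfl⟩ ⟨W', hW', hc', rfl⟩ x hx hx'
      have h : W = W' := by
        by_contra hne
        have e1 : x ∈ U0 ∧ x ∉ W := by
          rcases hx with rfl | hx
          · exact cU W _ hW.1 hc
          · exact ⟨hx.1, hx.2.1⟩
        have e2 : x ∉ W' := by
          rcases hx' with rfl | hx
          · exact (cU W' _ hW'.1 hc').2
          · exact hx.2.1
        have := e1.1
        rw [← cover W W' hW hW' hne, Finset.mem_union] at this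
        tauto
      subst h
      rw [hc, Finset.singleton_inj] at hc'
      subst hc'
      exact ⟨rfl, rfl⟩
    · intro a D E hT hX
      have hsubU := H.sub hUA (by omega) hT fun x hx h =>
        hX x hx (Finset.mem_union_left _ (Finset.mem_union_right _ h))
      have haU := hsubU a (Set.mem_insert _ _)
      have haZ : a ∉ Z := fun h => hX a (Set.mem_insert _ _)
        (Finset.mem_union_left _ (Finset.mem_union_left _ h))
      obtain ⟨W, hW, haW⟩ := exQ a hT.mem haU haZ
      have hnb : ∀ y ∈ Z ∪ bd G U0, ¬ Bad W y := by
        intro y hy hb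
        have hfy := hf2 y W hW hb
        have hWd := dP W hW.1
        have := H.sub hW.1.2.2.1 (by omega) hT (fun x hx h => hX x hx
          (Finset.mem_union_right _ (Finset.mem_biUnion.2 ⟨y, hy, hfy ▸ h⟩))) a
          (Set.mem_insert _ _)
        exact haW (Finset.mem_union_left _ this)
      have hZW : ∀ y ∈ Z, y ∈ U0 → y ∈ W := fun y hy hyU => by
        by_contra h
        exact hnb y (Finset.mem_union_left _ hy) (Or.inl ⟨hy, hyU, h⟩)
      have hbW : bd G U0 ⊆ bd G W := fun y hy => by
        by_contra h
        exact hnb y (Finset.mem_union_right _ hy) (Or.inr ⟨hy, h⟩)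
      have n1 : defect G Z W ≤ defect G Z U0 := by
        refine add_le_add (Finset.card_le_card ?_) (Finset.card_le_card ?_)
        · intro y hy
          rw [Finset.mem_sdiff] at hy ⊢
          exact ⟨hy.1, fun h => hy.2 (hZW y hy.1 h)⟩
        · intro y hy
          rw [Finset.mem_sdiff, Finset.mem_union] at hy ⊢
          refine ⟨hy.1, fun h => hy.2 (h.imp (hZW y hy.1) fun h => hbW h)⟩
      have n2 := defect_anti (G := G) Z hW.1.1
      have e1 := hW.1.2.2.2
      -- `W` and `U0` have the same defect, and `U0` is tight.
      have hc1 : #(bd G W \ bd G U0) = 1 := by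
        have := Finset.card_sdiff_add_card_eq_card hbW
        omega
      obtain ⟨c, hc⟩ := Finset.card_eq_one.1 hc1
      refine ⟨c, _, ⟨W, hW, hc, rfl⟩, haU, fun h => haW (Finset.mem_union_left _ h), ?_⟩
      rintro rfl
      have : a ∈ bd G W \ bd G U0 := by simp [hc]
      exact haW (Finset.mem_union_right _ (Finset.mem_sdiff.1 this).1)
    · rintro c S ⟨W, hW, hc, rfl⟩ hS
      have hWd := dP W hW.1
      refine H.tangle W (by omega) hW.1.2.2.1 (hS.mono ?_)
      rintro x ⟨hxU, hxW, hxc⟩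
      exact ⟨hxW, fun h => hxc (bW W c x hc hxU h)⟩

end

/-! ### Packings and gadgets in lobes -/

section
variable {V : Type} {G : SimpleGraph V} {A B : Set V}

/-- There are `k` disjoint vertex sets that each contain an `A`-`A`-`B`-path. -/
def Pack (G : SimpleGraph V) (A B : Set V) (k : ℕ) : Prop :=
  ∃ K : Fin k → Set V, (∀ i, AAB G A B (K i)) ∧ ∀ i j, i ≠ j → Disjoint (K i) (K j)

lemma pack_of_finset {ι : Type} {k : ℕ} (s : Finset ι) (K : ι → Set V) (hk : k ≤ #s)
    (hK : ∀ i ∈ s, AAB G A B (K i)) (hd : ∀ i ∈ s, ∀ j ∈ s, i ≠ j → Disjoint (K i) (K j)) :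
    Pack G A B k := by
  obtain ⟨s', hs', hc⟩ := Finset.exists_subset_card_eq hk
  let e := (Finset.equivFinOfCardEq hc).symm
  refine ⟨fun i => K (e i), fun i => hK _ (hs' (e i).2), fun i j hij => ?_⟩
  refine hd _ (hs' (e i).2) _ (hs' (e j).2) fun h => hij ?_
  exact e.injective (Subtype.ext h)

/-- A set `X` meets at most `#X` members of a disjoint family. -/
lemma card_avoid {ι : Type} (I : Finset ι) (C : ι → Set V) (X : Finset V)
    (hd : ∀ i ∈ I, ∀ j ∈ I, i ≠ j → Disjoint (C i) (C j)) :
    ∃ I' ⊆ I, #I ≤ #I' + #X ∧ ∀ i ∈ I', ∀ x ∈ C i, x ∉ X := by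
  refine ⟨I.filter fun i => ∀ x ∈ C i, x ∉ X, Finset.filter_subset _ _, ?_,
    fun i hi => (Finset.mem_filter.1 hi).2⟩
  rw [← Finset.card_filter_add_card_filter_not (s := I) (fun i => ∀ x ∈ C i, x ∉ X)]
  refine Nat.add_le_add_left ?_ _
  have : ∀ i ∈ I.filter (fun i => ¬ ∀ x ∈ C i, x ∉ X), ∃ x ∈ X, x ∈ C i := by
    intro i hi
    have := (Finset.mem_filter.1 hi).2
    push Not at this
    obtain ⟨x, h1, h2⟩ := this
    exact ⟨x, h2, h1⟩
  refine Finset.card_le_card_of_forall_subsingleton (fun i x => x ∈ C i)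
    (fun i hi => this i hi) ?_
  intro x hx i hi j hj
  by_contra hij
  exact Set.disjoint_left.1 (hd i (Finset.mem_filter.1 hi.1).1 j (Finset.mem_filter.1 hj.1).1 hij)
    hi.2 hj.2

variable {X : Finset V} {L : V → Set V → Prop}

/-- A connected set avoiding `X` and the cut vertex of a lobe does not leave the lobe. -/
lemma Lobes.stay (hL : Lobes G A B X L) {c : V} {S K : Set V} (h : L c S) (hK : Conn G K)
    (hX : ∀ x ∈ K, x ∉ X) (hc : c ∉ K) {x : V} (hx : x ∈ K) (hxS : x ∈ S) : K ⊆ S := by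
  refine hK.closed (fun u hu huS w hw huw => ?_) hx hxS
  by_contra hwS
  rcases hL.nbr c S h u huS w hwS huw with rfl | h
  · exact hc hw
  · exact hX w hw h

/-- A connected set avoiding `X` that contains `c` and a vertex `y` of the lobe at `c` can be cut
down to one inside the lobe together with `c`. -/
lemma Lobes.truncate (hL : Lobes G A B X L) {c : V} {S E : Set V} (h : L c S) (hE : Conn G E)
    (hX : ∀ x ∈ E, x ∉ X) (hc : c ∈ E) {y : V} (hy : y ∈ E) (hyS : y ∈ insert c S) :
    ∃ E' ⊆ E, Conn G E' ∧ y ∈ E' ∧ c ∈ E' ∧ E' ⊆ insert c S := by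
  rcases hyS with rfl | hyS
  · exact ⟨{y}, by simpa using hy, conn_singleton y, rfl, rfl, by simp⟩
  have hne : y ≠ c := by
    rintro rfl; exact hL.notMem _ _ h hyS
  obtain ⟨p, hp⟩ := hE y hy c hc
  obtain ⟨v, rfl, hvp, R, hR, hyR, hRp, hd, u, hu, huv⟩ :=
    first_hit (M := {c}) p (by simpa using hne) rfl
  have hRE : R ⊆ E := fun z hz => hp z (hRp z hz)
  have hRS : R ⊆ S := hL.stay h hR (fun x hx => hX x (hRE hx)) (by simpa using hd) hyR hyS
  refine ⟨R ∪ {v}, Set.union_subset hRE (by simpa using hc),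
    hR.union_adj (conn_singleton v) hu rfl huv, Or.inl hyR, Or.inr rfl, ?_⟩
  rintro z (hz | rfl)
  · exact Or.inr (hRS hz)
  · exact Or.inl rfl

/-- A gadget at the cut vertex `c` of a lobe `S`: a fork at a vertex `a ∈ A ∩ S` with one side `D`
inside the lobe and the other side `E` reaching `c`. -/
structure Gad (G : SimpleGraph V) (A : Set V) (L : V → Set V → Prop) (c : V) (S : Set V) (a : V)
    (D E : Set V) : Prop where
  lobe : L c S
  memA : a ∈ A
  mem : a ∈ S
  fork : Fork G a D E
  subD : D ⊆ S
  subE : E ⊆ insert c S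
  attach : c ∈ E

lemma Gad.of_fork (hL : Lobes G A B X L) {c : V} {S : Set V} (h : L c S) {a : V} {D E : Set V}
    (ha : a ∈ A) (haS : a ∈ S) (hF : Fork G a D E) (hX : ∀ x ∈ insert a (D ∪ E), x ∉ X)
    (hc : c ∈ E) : ∃ E' ⊆ E, Gad G A L c S a D E' := by
  have hXD : ∀ x ∈ D, x ∉ X := fun x hx => hX x (Or.inr (Or.inl hx))
  have hXE : ∀ x ∈ E, x ∉ X := fun x hx => hX x (Or.inr (Or.inr hx))
  have hcD : c ∉ D := fun h => Set.disjoint_left.1 hF.disj h hc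
  obtain ⟨x, hx, hax⟩ := hF.adjD
  obtain ⟨y, hy, hay⟩ := hF.adjE
  have hxS : x ∈ S := by
    by_contra hxS
    rcases hL.nbr c S h a haS x hxS hax with rfl | h
    · exact hcD hx
    · exact hXD x hx h
  have hyS : y ∈ insert c S := by
    by_contra hyS
    rw [Set.mem_insert_iff, not_or] at hyS
    rcases hL.nbr c S h a haS y hyS.2 hay with rfl | h
    · exact hyS.1 rfl
    · exact hXE y hy h
  obtain ⟨E', hE', h1, h2, h3, h4⟩ := hL.truncate h hF.connE hXE hc hy hyS
  refine ⟨E', hE', h, ha, haS, ⟨hF.connD, h1, hF.disj.mono_right hE', hF.notD,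
    fun h => hF.notE (hE' h), hF.adjD, y, h2, hay⟩, ?_, h4, h3⟩
  exact hL.stay h hF.connD hXD hcD hx hxS

/-- Every trip avoiding `X` contains a cut vertex `c` with a gadget whose side `D` meets `A` or `B`. -/
lemma Lobes.hit (hL : Lobes G A B X L) {a : V} {D E : Set V} (hT : Trip G A B a D E)
    (hX : ∀ x ∈ insert a (D ∪ E), x ∉ X) :
    ∃ c ∈ insert a (D ∪ E), (∃ S a D E, Gad G A L c S a D E ∧ (D ∩ A).Nonempty) ∨
      (∃ S a D E, Gad G A L c S a D E ∧ (D ∩ B).Nonempty) := by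
  obtain ⟨c, S, h, haS⟩ := hL.cover a D E hT hX
  by_cases hcE : c ∈ E
  · obtain ⟨E', -, hg⟩ := Gad.of_fork hL h hT.mem haS hT.fork hX hcE
    exact ⟨c, by simp [hcE], Or.inl ⟨S, a, D, E', hg, hT.memD⟩⟩
  by_cases hcD : c ∈ D
  · obtain ⟨D', -, hg⟩ := Gad.of_fork hL h hT.mem haS hT.fork.symm (by
      rwa [Set.union_comm]) hcD
    exact ⟨c, by simp [hcD], Or.inr ⟨S, a, E, D', hg, hT.memE⟩⟩
  refine absurd (hT.aab.mono ?_) (hL.small c S h)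
  refine hL.stay h hT.fork.conn hX ?_ (Set.mem_insert a _) haS
  rintro (rfl | h | h)
  · exact hL.notMem _ _ h haS
  · exact hcD h
  · exact hcE h

variable [Fintype V]

/-- Gadgets at the vertices of a free set can be joined in pairs by disjoint paths outside the
lobes. If each joined pair contains an `A`-`A`-`B`-path by `hR`, this gives a packing. -/
lemma Lobes.pair (hL : Lobes G A B X L) {t : ℕ} (H : Haven G A B t) {k : ℕ}
    (R : V → Set V → Prop)
    (hR : ∀ a D a' D' E', R a D → R a' D' → a ∈ A → a' ∈ A → Fork G a' D' E' → a ∈ E' →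
      AAB G A B (insert a' (D' ∪ E')))
    {F : Finset V} (hF : Free G A B F)
    (hg : ∀ c ∈ F, ∃ S a D E, Gad G A L c S a D E ∧ R a D)
    (hcard : 2 * (k + #X) ≤ #F) (ht : k + #X ≤ t) : Pack G A B k := by
  obtain ⟨I, hIF, hI⟩ := Finset.exists_subset_card_eq (show k + #X ≤ #F by omega)
  obtain ⟨J, hJF, hJ⟩ := Finset.exists_subset_card_eq (show k + #X ≤ #(F \ I) by
    rw [Finset.card_sdiff_of_subset hIF]; omega)
  have hJF' : J ⊆ F := hJF.trans Finset.sdiff_subset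
  have hIJ : ∀ x ∈ I, x ∉ J := fun x hx h => (Finset.mem_sdiff.1 (hJF h)).2 hx
  obtain ⟨C, hC, hCd⟩ := H.link (hF.mono hIF) (hF.mono hJF') (by omega) (by omega)
  have hC' : ∀ x : V, ∃ w, x ∈ I → w ∈ J ∧ ∃ p : G.Walk x w, p.IsPath ∧
      C x = {z | z ∈ p.support} ∧ ∀ z ∈ p.support, z ∈ J → z = w := fun x => by
    by_cases hx : x ∈ I
    · obtain ⟨w, h⟩ := hC x hx
      exact ⟨w, fun _ => h⟩
    · exact ⟨x, fun h => absurd h hx⟩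
  choose w hw using hC'
  have hg' : ∀ c, ∃ S a D E, c ∈ F → Gad G A L c S a D E ∧ R a D := fun c => by
    by_cases hc : c ∈ F
    · obtain ⟨S, a, D, E, h⟩ := hg c hc
      exact ⟨S, a, D, E, fun _ => h⟩
    · exact ⟨∅, c, ∅, ∅, fun h => absurd h hc⟩
  choose S a D E hgad using hg'
  have hself : ∀ c ∈ I, c ∈ C c := fun c hc => by
    obtain ⟨-, p, -, h, -⟩ := hw c hc
    rw [h]; exact p.start_mem_support
  have hwC : ∀ c ∈ I, w c ∈ C c := fun c hc => by
    obtain ⟨-, p, -, h, -⟩ := hw c hc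
    rw [h]; exact p.end_mem_support
  have hlobe : ∀ c ∈ F, L c (S c) := fun c hc => (hgad c hc).1.lobe
  have huniq : ∀ c ∈ F, ∀ d ∈ F, ∀ x, x ∈ insert c (S c) → x ∈ insert d (S d) → c = d :=
    fun c hc d hd x hx hx' => (hL.uniq _ _ _ _ (hlobe c hc) (hlobe d hd) x hx hx').1
  have hends : ∀ c ∈ I, ∀ d ∈ F, d ∈ C c → d ∈ I ∪ J → d = c ∨ d = w c := by
    intro c hc d hd hdc hdI
    obtain ⟨-, p, -, h, h'⟩ := hw c hc
    rcases Finset.mem_union.1 hdI with hdI | hdJ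
    · left
      by_contra hne
      exact Set.disjoint_left.1 (hCd d hdI c hc hne) (hself d hdI) hdc
    · right
      rw [h] at hdc
      exact h' d hdc hdJ
  obtain ⟨I', hI'I, hI'c, hI'X⟩ := card_avoid I C X hCd
  replace hI'c : k ≤ #I' := by omega
  have hwF : ∀ c ∈ I, w c ∈ F := fun c hc => hJF' (hw c hc).1
  have hne : ∀ c ∈ I, c ≠ w c := fun c hc h => hIJ c hc (h ▸ (hw c hc).1)
  -- A path of the linkage that avoids `X` enters no lobe of a vertex in `I ∪ J`.
  have hout : ∀ c ∈ I', ∀ d ∈ I ∪ J, d ∈ F → Disjoint (C c) (S d) := by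
    intro c hc d hdI hd
    have hcX := hI'X c hc
    replace hc := hI'I hc
    have hcF := hIF hc
    obtain ⟨hwJ, p, hp, hCp, -⟩ := hw c hc
    rw [Set.disjoint_left]
    intro x hxC hxS
    have hxd : x ≠ d := by rintro rfl; exact hL.notMem _ _ (hlobe x hd) hxS
    by_cases hdC : d ∈ C c
    · rcases hends c hc d hd hdC hdI with rfl | rfl
      · obtain ⟨T, hT1, hT2, hT3, hT4⟩ := tail_of_path p hp
        rw [← hCp] at hT3
        rw [hT3] at hxC
        have := hL.stay (hlobe d hd) hT1 (fun y hy => hcX y (hT3 ▸ Or.inr hy)) hT2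
          (hxC.resolve_left hxd) hxS (hT4 (hne d hc).symm)
        exact hne d hc (huniq d hd _ (hwF d hc) (w d) (Or.inr this) (Or.inl rfl))
      · obtain ⟨T, hT1, hT2, hT3, hT4⟩ := tail_of_path p.reverse hp.reverse
        have hT3' : C c = insert (w c) T := by
          rw [hCp, ← hT3]; ext z; simp
        rw [hT3'] at hxC
        have := hL.stay (hlobe _ hd) hT1 (fun y hy => hcX y (hT3' ▸ Or.inr hy)) hT2
          (hxC.resolve_left hxd) hxS (hT4 (hne c hc))
        exact hne c hc (huniq c hcF _ hd c (Or.inl rfl) (Or.inr this))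
    · have hconn : Conn G (C c) := hCp ▸ conn_support p
      have := hL.stay (hlobe d hd) hconn hcX hdC hxC hxS (hself c hc)
      have := huniq c hcF d hd c (Or.inl rfl) (Or.inr this)
      exact hdC (this ▸ hself c hc)
  refine pack_of_finset I' (fun c => insert c (S c) ∪ C c ∪ insert (w c) (S (w c))) hI'c ?_ ?_
  · intro c hc'
    have hc := hI'I hc'
    have hcF := hIF hc
    have hw' := hwF c hc
    obtain ⟨gc, rc⟩ := hgad c hcF
    obtain ⟨gw, rw'⟩ := hgad (w c) hw'
    obtain ⟨hwJ, p, hp, hCp, -⟩ := hw c hc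
    have hconn : Conn G (C c) := hCp ▸ conn_support p
    have ho1 := hout c hc' (w c) (Finset.mem_union_right _ hwJ) hw'
    obtain ⟨y, hy, hay⟩ := gc.fork.adjE
    obtain ⟨z, hz, haz⟩ := gw.fork.adjE
    have hsep : ∀ x ∈ E (w c) ∪ (C c ∪ insert (a c) (E c)), x ∈ S (w c) → x ∈ E (w c) := by
      rintro x (hx | hx | hx) hxS
      · exact hx
      · exact absurd hxS (Set.disjoint_left.1 ho1 hx)
      · refine absurd (huniq c hcF _ hw' x ?_ (Or.inr hxS)) (hne c hc)
        rcases hx with rfl | hx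
        · exact Or.inr gc.mem
        · exact gc.subE hx
    have hfork : Fork G (a (w c)) (D (w c)) (E (w c) ∪ (C c ∪ insert (a c) (E c))) := by
      refine ⟨gw.fork.connD, ?_, ?_, gw.fork.notD, ?_, gw.fork.adjD, z, Or.inl hz, haz⟩
      · refine gw.fork.connE.union (hconn.union (gc.fork.connE.insert_adj hy hay)
          (hself c hc) (Or.inr gc.attach)) gw.attach (Or.inl (hwC c hc))
      · rw [Set.disjoint_left]
        intro x hx hx'
        exact Set.disjoint_left.1 gw.fork.disj hx (hsep x hx' (gw.subD hx))
      · intro h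
        exact gw.fork.notE (hsep _ h gw.mem)
    refine (hR _ _ _ _ _ rc rw' gc.memA gw.memA hfork (by simp)).mono ?_
    rintro x (rfl | hx | hx | hx | rfl | hx)
    · exact Or.inr (Or.inr gw.mem)
    · exact Or.inr (Or.inr (gw.subD hx))
    · exact Or.inr (gw.subE hx)
    · exact Or.inl (Or.inr hx)
    · exact Or.inl (Or.inl (Or.inr gc.mem))
    · exact Or.inl (Or.inl (gc.subE hx))
  · intro c hc' d hd' hcd
    have hc := hI'I hc'
    have hd := hI'I hd'
    have hCC := hCd c hc d hd hcd
    have hww : w c ≠ w d := fun h => Set.disjoint_left.1 hCC (hwC c hc) (h ▸ hwC d hd)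
    have hcw : ∀ c ∈ I, ∀ d ∈ I, c ≠ w d := fun c hc d hd h => hIJ c hc (h ▸ (hw d hd).1)
    have dis : ∀ x ∈ I ∪ J, ∀ y ∈ I ∪ J, x ∈ F → y ∈ F → x ≠ y →
        Disjoint (insert x (S x)) (insert y (S y)) := by
      intro x _ y _ hx hy hxy
      rw [Set.disjoint_left]
      exact fun z hz hz' => hxy (huniq x hx y hy z hz hz')
    have dis2 : ∀ c ∈ I', ∀ d ∈ I, c ≠ d → Disjoint (C c) (insert d (S d)) ∧
        Disjoint (C c) (insert (w d) (S (w d))) := by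
      intro c hc' d hd hcd
      have hc := hI'I hc'
      have hCC := hCd c hc d hd hcd
      rw [Set.disjoint_insert_right, Set.disjoint_insert_right]
      exact ⟨⟨fun h => Set.disjoint_left.1 hCC h (hself d hd),
          hout c hc' d (Finset.mem_union_left _ hd) (hIF hd)⟩,
        fun h => Set.disjoint_left.1 hCC h (hwC d hd),
        hout c hc' _ (Finset.mem_union_right _ (hw d hd).1) (hwF d hd)⟩
    have uI : ∀ c ∈ I, c ∈ I ∪ J := fun c hc => Finset.mem_union_left _ hc
    have uJ : ∀ c ∈ I, w c ∈ I ∪ J := fun c hc => Finset.mem_union_right _ (hw c hc).1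
    simp only [Set.disjoint_union_left, Set.disjoint_union_right]
    refine ⟨⟨⟨⟨?_, ?_⟩, ?_⟩, ⟨?_, ?_⟩, ?_⟩, ⟨?_, ?_⟩, ?_⟩
    all_goals first
      | exact hCC
      | exact (dis2 c hc' d hd hcd).1
      | exact (dis2 c hc' d hd hcd).2
      | exact (dis2 d hd' c hc hcd.symm).1.symm
      | exact (dis2 d hd' c hc hcd.symm).2.symm
      | exact dis _ (uI c hc) _ (uI d hd) (hIF hc) (hIF hd) hcd
      | exact dis _ (uJ c hc) _ (uJ d hd) (hwF c hc) (hwF d hd) hww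
      | exact dis _ (uI c hc) _ (uJ d hd) (hIF hc) (hwF d hd) (hcw c hc d hd)
      | exact dis _ (uJ c hc) _ (uI d hd) (hwF c hc) (hIF hd) (hcw d hd c hc).symm

end

/-! ### Packing from lobes -/

section
variable {V : Type} {G : SimpleGraph V} {A B : Set V}
variable {X : Finset V} {L : V → Set V → Prop}

/-- A gadget with a side meeting `A` whose lobe contains, together with `c`, a path from `c` to
`B`: either there is an `A`-`A`-`B`-path in the lobe with `c`, or there is a gadget of one of the two
kinds that can be joined in pairs. -/
lemma Gad.inside (hL : Lobes G A B X L) {c : V} {S : Set V} {a : V} {D E : Set V}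
    (g : Gad G A L c S a D E) (hD : (D ∩ A).Nonempty) {b : V} (hb : b ∈ B) (p : G.Walk c b)
    (hp : ∀ z ∈ p.support, z ∈ insert c S) :
    AAB G A B (insert c S) ∨ (∃ S a D E, Gad G A L c S a D E ∧ (D ∩ B).Nonempty) ∨
      (∃ S a D E, Gad G A L c S a D E ∧ a ∈ B ∧ (D ∩ A).Nonempty) := by
  have hcS := hL.notMem _ _ g.lobe
  have hsub : ∀ E' ⊆ insert c S, insert a (D ∪ E') ⊆ insert c S := by
    intro E' hE'
    refine Set.insert_subset (Or.inr g.mem) (Set.union_subset ?_ hE')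
    exact fun x hx => Or.inr (g.subD hx)
  have main : ∀ E', Fork G a D E' → E' ⊆ insert c S → b ∈ E' → AAB G A B (insert c S) :=
    fun E' hf hs hbE => ⟨a, D, E', ⟨hf, g.memA, hD, ⟨b, hbE, hb⟩⟩, hsub E' hs⟩
  by_cases hbE : b ∈ E
  · exact Or.inl (main E g.fork g.subE hbE)
  by_cases hbD : b ∈ D
  · exact Or.inr (Or.inl ⟨S, a, D, E, g, b, hbD, hb⟩)
  by_cases hba : b = a
  · exact Or.inr (Or.inr ⟨S, a, D, E, g, hba ▸ hb, hD⟩)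
  obtain ⟨v, hv, -, R, hR, hbR, hRp, hd, u, hu, huv⟩ :=
    first_hit (M := insert a (D ∪ E)) p.reverse
      (by simp [hbE, hbD, hba]) (Or.inr (Or.inr g.attach))
  simp only [Set.disjoint_insert_right, Set.disjoint_union_right] at hd
  obtain ⟨haR, hRD, hRE⟩ := hd
  have hRS : R ⊆ insert c S := fun z hz => hp z (by simpa using hRp z hz)
  rcases hv with rfl | hv | hv
  · left
    exact main R ⟨g.fork.connD, hR, hRD.symm, g.fork.notD, haR, g.fork.adjD, u, hu, huv.symm⟩
      hRS hbR
  · right; left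
    obtain ⟨x, hx, hax⟩ := g.fork.adjD
    refine ⟨S, a, D ∪ R, E, ⟨g.lobe, g.memA, g.mem, ⟨?_, g.fork.connE, ?_, ?_, g.fork.notE,
      ⟨x, Or.inl hx, hax⟩, g.fork.adjE⟩, ?_, g.subE, g.attach⟩, b, Or.inr hbR, hb⟩
    · exact g.fork.connD.union_adj hR hv hu huv.symm
    · exact Set.disjoint_union_left.2 ⟨g.fork.disj, hRE⟩
    · exact fun h => h.elim g.fork.notD haR
    · refine Set.union_subset g.subD fun z hz => (hRS hz).resolve_left ?_
      rintro rfl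
      exact Set.disjoint_left.1 hRE hz g.attach
  · left
    obtain ⟨x, hx, hax⟩ := g.fork.adjE
    refine main (E ∪ R) ⟨g.fork.connD, ?_, ?_, g.fork.notD, ?_, g.fork.adjD,
      ⟨x, Or.inl hx, hax⟩⟩ (Set.union_subset g.subE hRS) (Or.inr hbR)
    · exact g.fork.connE.union_adj hR hv hu huv.symm
    · exact Set.disjoint_union_right.2 ⟨g.fork.disj, hRD.symm⟩
    · exact fun h => h.elim g.fork.notE haR

variable [Fintype V]

/-- Gadgets with `D ∩ B` nonempty are joined in pairs: the fork vertex of one is the `A`-end,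
the fork vertex of the other is the interior vertex. -/
lemma Lobes.pairB (hL : Lobes G A B X L) {t : ℕ} (H : Haven G A B t) {k : ℕ}
    {F : Finset V} (hF : Free G A B F)
    (hg : ∀ c ∈ F, ∃ S a D E, Gad G A L c S a D E ∧ (D ∩ B).Nonempty)
    (hcard : 2 * (k + #X) ≤ #F) (ht : k + #X ≤ t) : Pack G A B k := by
  refine hL.pair H (fun _ D => (D ∩ B).Nonempty) ?_ hF hg hcard ht
  intro a D a' D' E' _ h' ha ha' hf hE
  have : Trip G A B a' E' D' := ⟨hf.symm, ha', ⟨a, hE, ha⟩, h'⟩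
  rw [Set.union_comm]
  exact this.aab

/-- Gadgets with `a ∈ B` and `D ∩ A` nonempty are joined in pairs: the fork vertex of one is the
`B`-end of a path through the other. -/
lemma Lobes.pairA (hL : Lobes G A B X L) {t : ℕ} (H : Haven G A B t) {k : ℕ}
    {F : Finset V} (hF : Free G A B F)
    (hg : ∀ c ∈ F, ∃ S a D E, Gad G A L c S a D E ∧ a ∈ B ∧ (D ∩ A).Nonempty)
    (hcard : 2 * (k + #X) ≤ #F) (ht : k + #X ≤ t) : Pack G A B k := by
  refine hL.pair H (fun a D => a ∈ B ∧ (D ∩ A).Nonempty) ?_ hF hg hcard ht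
  intro a D a' D' E' h h' ha ha' hf hE
  have : Trip G A B a' D' E' := ⟨hf, ha', h'.2, ⟨a, hE, h.1⟩⟩
  exact this.aab

/-- Gadgets with `D ∩ A` nonempty are linked to a free subset of `B`. A linking path that stays
outside its lobe completes an `A`-`A`-`B`-path; otherwise it ends inside the lobe and `Gad.inside`
applies. -/
lemma Lobes.single (hL : Lobes G A B X L) {t : ℕ} (H : Haven G A B t) {k : ℕ}
    {F B0 : Finset V} (hF : Free G A B F) (hB0 : Free G A B B0) (hB : ∀ b ∈ B0, b ∈ B)
    (hg : ∀ c ∈ F, ∃ S a D E, Gad G A L c S a D E ∧ (D ∩ A).Nonempty)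
    (hle : #F ≤ #B0) (hcard : 5 * (k + #X) ≤ #F) (ht : #F ≤ t) : Pack G A B k := by
  obtain ⟨C, hC, hCd⟩ := H.link hF hB0 hle ht
  have hg' : ∀ c, ∃ S a D E, c ∈ F → Gad G A L c S a D E ∧ (D ∩ A).Nonempty := fun c => by
    by_cases hc : c ∈ F
    · obtain ⟨S, a, D, E, h⟩ := hg c hc
      exact ⟨S, a, D, E, fun _ => h⟩
    · exact ⟨∅, c, ∅, ∅, fun h => absurd h hc⟩
  choose S a D E hgad using hg'
  obtain ⟨I, hIF, hIc, hIX⟩ := card_avoid F C X hCd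
  have hself : ∀ c ∈ F, c ∈ C c := fun c hc => by
    obtain ⟨w, -, p, -, h, -⟩ := hC c hc
    rw [h]; exact p.start_mem_support
  have hlobe : ∀ c ∈ F, L c (S c) := fun c hc => (hgad c hc).1.lobe
  have huniq : ∀ c ∈ F, ∀ d ∈ F, ∀ x, x ∈ insert c (S c) → x ∈ insert d (S d) → c = d :=
    fun c hc d hd x hx hx' => (hL.uniq _ _ _ _ (hlobe c hc) (hlobe d hd) x hx hx').1
  have hout : ∀ c ∈ I, ∀ d ∈ F, c ≠ d → Disjoint (C c) (insert d (S d)) := by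
    intro c hc' d hd hcd
    have hc := hIF hc'
    obtain ⟨w, -, p, -, hCp, -⟩ := hC c hc
    have hdC : d ∉ C c := fun h => Set.disjoint_left.1 (hCd c hc d hd hcd) h (hself d hd)
    rw [Set.disjoint_insert_right]
    refine ⟨hdC, Set.disjoint_left.2 fun x hx hxS => ?_⟩
    have := hL.stay (hlobe d hd) (hCp ▸ conn_support p) (hIX c hc') hdC hx hxS (hself c hc)
    exact hcd (huniq c hc d hd c (Or.inl rfl) (Or.inr this))
  have hcases : ∀ c ∈ I, AAB G A B (insert c (S c) ∪ C c) ∨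
      (∃ S a D E, Gad G A L c S a D E ∧ (D ∩ B).Nonempty) ∨
      (∃ S a D E, Gad G A L c S a D E ∧ a ∈ B ∧ (D ∩ A).Nonempty) := by
    intro c hc'
    have hc := hIF hc'
    obtain ⟨b, hb, p, hp, hCp, -⟩ := hC c hc
    obtain ⟨g, hD⟩ := hgad c hc
    have hbC : b ∈ C c := by rw [hCp]; exact p.end_mem_support
    by_cases hdis : Disjoint (C c) (S c)
    · left
      obtain ⟨x, hx, hax⟩ := g.fork.adjE
      refine ⟨a c, D c, E c ∪ C c, ⟨⟨g.fork.connD, ?_, ?_, g.fork.notD, ?_, g.fork.adjD,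
        ⟨x, Or.inl hx, hax⟩⟩, g.memA, hD, ⟨b, Or.inr hbC, hB b hb⟩⟩, ?_⟩
      · exact g.fork.connE.union (hCp ▸ conn_support p) g.attach (hself c hc)
      · exact Set.disjoint_union_right.2 ⟨g.fork.disj, (hdis.mono_right g.subD).symm⟩
      · exact fun h => h.elim g.fork.notE fun h => Set.disjoint_left.1 hdis h g.mem
      · rintro y (rfl | hy | hy | hy)
        · exact Or.inl (Or.inr g.mem)
        · exact Or.inl (Or.inr (g.subD hy))
        · exact Or.inl (g.subE hy)
        · exact Or.inr hy
    · rw [Set.not_disjoint_iff] at hdis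
      obtain ⟨x, hx, hxS⟩ := hdis
      obtain ⟨T, hT1, hT2, hT3, hT4⟩ := tail_of_path p hp
      rw [← hCp] at hT3
      have hxc : x ≠ c := by rintro rfl; exact hL.notMem _ _ g.lobe hxS
      rw [hT3] at hx
      have hTS := hL.stay g.lobe hT1 (fun y hy => hIX c hc' y (hT3 ▸ Or.inr hy)) hT2
        (hx.resolve_left hxc) hxS
      refine (g.inside hL hD (hB b hb) p fun z hz => ?_).imp_left fun h =>
        h.mono Set.subset_union_left
      have : z ∈ C c := by rw [hCp]; exact hz
      rw [hT3] at this
      exact Set.insert_subset_insert hTS this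
  set I1 := I.filter fun c => AAB G A B (insert c (S c) ∪ C c)
  set I2 := I.filter fun c => ∃ S a D E, Gad G A L c S a D E ∧ (D ∩ B).Nonempty
  set I3 := I.filter fun c => ∃ S a D E, Gad G A L c S a D E ∧ a ∈ B ∧ (D ∩ A).Nonempty
  have hI : I ⊆ I1 ∪ (I2 ∪ I3) := by
    intro c hc
    simp only [I1, I2, I3, Finset.mem_union, Finset.mem_filter]
    exact (hcases c hc).imp (⟨hc, ·⟩) (Or.imp (⟨hc, ·⟩) (⟨hc, ·⟩))
  have hle := Finset.card_le_card hI
  have h1 := Finset.card_union_le I1 (I2 ∪ I3)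
  have h2 := Finset.card_union_le I2 I3
  rcases (by omega : k ≤ #I1 ∨ 2 * (k + #X) ≤ #I2 ∨ 2 * (k + #X) ≤ #I3) with h | h | h
  · refine pack_of_finset I1 (fun c => insert c (S c) ∪ C c) h
      (fun c hc => (Finset.mem_filter.1 hc).2) ?_
    intro c hc d hd hcd
    replace hc := (Finset.mem_filter.1 hc).1
    replace hd := (Finset.mem_filter.1 hd).1
    rw [Set.disjoint_union_left, Set.disjoint_union_right, Set.disjoint_union_right]
    refine ⟨⟨?_, (hout d hd c (hIF hc) hcd.symm).symm⟩, hout c hc d (hIF hd) hcd,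
      hCd c (hIF hc) d (hIF hd) hcd⟩
    exact Set.disjoint_left.2 fun x hx hx' => hcd (huniq c (hIF hc) d (hIF hd) x hx hx')
  · exact hL.pairB H (hF.mono ((Finset.filter_subset _ _).trans hIF))
      (fun c hc => (Finset.mem_filter.1 hc).2) h (by omega)
  · exact hL.pairA H (hF.mono ((Finset.filter_subset _ _).trans hIF))
      (fun c hc => (Finset.mem_filter.1 hc).2) h (by omega)

/-- In a haven of large order, a system of lobes yields a packing. -/
lemma Lobes.pack (hL : Lobes G A B X L) {t : ℕ} (H : Haven G A B t) (k : ℕ)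
    (ht : 15 * (k + #X) ≤ t) : Pack G A B k := by
  set Z : Finset V := Finset.univ.filter fun c =>
    (∃ S a D E, Gad G A L c S a D E ∧ (D ∩ A).Nonempty) ∨
      (∃ S a D E, Gad G A L c S a D E ∧ (D ∩ B).Nonempty)
  obtain ⟨F, hFZ, hFc, hF⟩ : ∃ F ⊆ Z, #F = 7 * (k + #X) ∧ Free G A B F := by
    rcases H.exists_free Z (7 * (k + #X)) (by omega) with h | ⟨X', hX', h⟩
    · exact h
    · exfalso
      obtain ⟨a, D, E, hT, hX⟩ := H.trip (X ∪ X') ((Finset.card_union_le _ _).trans (by omega))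
      obtain ⟨c, hc, hc'⟩ := hL.hit hT fun x hx h => hX x hx (Finset.mem_union_left _ h)
      exact h a D E hT (fun x hx h => hX x hx (Finset.mem_union_right _ h)) c hc
        (Finset.mem_filter.2 ⟨Finset.mem_univ _, hc'⟩)
  obtain ⟨B0, hB, hBc, hB0⟩ : ∃ B0 ⊆ Finset.univ.filter (fun b => b ∈ B),
      #B0 = 5 * (k + #X) ∧ Free G A B B0 := by
    rcases H.exists_free (Finset.univ.filter (fun b => b ∈ B)) (5 * (k + #X)) (by omega)
      with h | ⟨X', hX', h⟩
    · exact h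
    · exfalso
      obtain ⟨a, D, E, hT, hX⟩ := H.trip X' (by omega)
      obtain ⟨b, hb, hbB⟩ := hT.memE
      exact h a D E hT hX b (Or.inr (Or.inr hb)) (Finset.mem_filter.2 ⟨Finset.mem_univ _, hbB⟩)
  set F1 := F.filter fun c => ∃ S a D E, Gad G A L c S a D E ∧ (D ∩ A).Nonempty
  set F2 := F.filter fun c => ∃ S a D E, Gad G A L c S a D E ∧ (D ∩ B).Nonempty
  have hsub : F ⊆ F1 ∪ F2 := by
    intro c hc
    have := (Finset.mem_filter.1 (hFZ hc)).2
    simp only [F1, F2, Finset.mem_union, Finset.mem_filter]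
    exact this.imp (⟨hc, ·⟩) (⟨hc, ·⟩)
  have h1 := Finset.card_le_card hsub
  have h2 := Finset.card_union_le F1 F2
  rcases (by omega : 5 * (k + #X) ≤ #F1 ∨ 2 * (k + #X) ≤ #F2) with h | h
  · obtain ⟨F', hF', hc⟩ := Finset.exists_subset_card_eq h
    exact hL.single H (hF.mono (hF'.trans (Finset.filter_subset _ _))) hB0
      (fun b hb => (Finset.mem_filter.1 (hB hb)).2)
      (fun c hc => (Finset.mem_filter.1 (hF' hc)).2) (by omega) (by omega) (by omega)
  · exact hL.pairB H (hF.mono (Finset.filter_subset _ _))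
      (fun c hc => (Finset.mem_filter.1 hc).2) h (by omega)

end

/-! ### Packing from a doubly free set -/

section
variable {V : Type} {G : SimpleGraph V} {A B : Set V}

/-- A path containing `2 * k` marked vertices has `k` disjoint connected pieces with two marked
vertices each. The second part, with one more marked vertex and a piece `R` at the start of the path
containing it, serves the induction. -/
lemma path_pairs {u v : V} (p : G.Walk u v) (hp : p.IsPath) : ∀ (k : ℕ) (W : Finset V),
    (∀ x ∈ W, x ∈ p.support) →
    (2 * k ≤ #W → ∃ Q : ℕ → Set V, (∀ i < k, Conn G (Q i) ∧ (∀ x ∈ Q i, x ∈ p.support) ∧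
        ∃ x ∈ W, ∃ y ∈ W, x ≠ y ∧ x ∈ Q i ∧ y ∈ Q i) ∧
        ∀ i < k, ∀ j < k, i ≠ j → Disjoint (Q i) (Q j)) ∧
    (2 * k + 1 ≤ #W → ∃ (Q : ℕ → Set V) (R : Set V),
        (∀ i < k, Conn G (Q i) ∧ (∀ x ∈ Q i, x ∈ p.support) ∧ Disjoint R (Q i) ∧
        ∃ x ∈ W, ∃ y ∈ W, x ≠ y ∧ x ∈ Q i ∧ y ∈ Q i) ∧
        (∀ i < k, ∀ j < k, i ≠ j → Disjoint (Q i) (Q j)) ∧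
        Conn G R ∧ (∀ x ∈ R, x ∈ p.support) ∧ u ∈ R ∧ ∃ x ∈ W, x ∈ R) := by
  induction p with
  | @nil u =>
    intro k W hW
    have hsub : W ⊆ {u} := fun x hx => by simpa using hW x hx
    have hc := Finset.card_le_card hsub
    rw [Finset.card_singleton] at hc
    constructor
    · intro h
      obtain rfl : k = 0 := by omega
      exact ⟨fun _ => ∅, by simp, by simp⟩
    · intro h
      obtain rfl : k = 0 := by omega
      obtain ⟨x, hx⟩ := Finset.card_pos.1 (by omega : 0 < #W)
      obtain rfl : x = u := by simpa using hsub hx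
      exact ⟨fun _ => ∅, {x}, by simp, by simp, conn_singleton x, by simp, rfl, x, hx, rfl⟩
  | @cons a b c h q ih =>
    rw [Walk.cons_isPath_iff] at hp
    obtain ⟨hq, ha⟩ := hp
    intro k W hW
    have hW' : ∀ x ∈ W.erase a, x ∈ q.support := by
      intro x hx
      rw [Finset.mem_erase] at hx
      have := hW x hx.2
      simpa [hx.1] using this
    have hsup : ∀ x ∈ q.support, x ∈ (Walk.cons h q).support := fun x hx => by simp [hx]
    by_cases haW : a ∈ W
    · have hc := Finset.card_erase_add_one haW
      constructor
      · intro hk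
        rcases k with _ | k
        · exact ⟨fun _ => ∅, by simp, by simp⟩
        obtain ⟨Q, R, h1, h2, h3, h4, h5, y, hy, hyR⟩ := (ih hq k _ hW').2 (by omega)
        rw [Finset.mem_erase] at hy
        refine ⟨Function.update Q k (insert a R), ?_, ?_⟩
        · intro i hi
          by_cases hik : i = k
          · subst hik
            rw [Function.update_self]
            refine ⟨h3.insert_adj h5 h, ?_, a, haW, y, hy.2, hy.1.symm, Or.inl rfl, Or.inr hyR⟩
            rintro x (rfl | hx)
            · simp
            · exact hsup x (h4 x hx)
          · rw [Function.update_of_ne hik]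
            obtain ⟨g1, g2, g3, x, hx, y, hy, hh⟩ := h1 i (by omega)
            exact ⟨g1, fun x hx => hsup x (g2 x hx), x, Finset.mem_of_mem_erase hx, y,
              Finset.mem_of_mem_erase hy, hh⟩
        · have key : ∀ i < k, Disjoint (insert a R) (Q i) := by
            intro i hi
            rw [Set.disjoint_insert_left]
            exact ⟨fun h => ha ((h1 i hi).2.1 a h), (h1 i hi).2.2.1⟩
          intro i hi j hj hij
          by_cases hik : i = k
          · subst hik
            rw [Function.update_self, Function.update_of_ne hij.symm]
            exact key j (by omega)
          · rw [Function.update_of_ne hik]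
            by_cases hjk : j = k
            · subst hjk
              rw [Function.update_self]
              exact (key i (by omega)).symm
            · rw [Function.update_of_ne hjk]
              exact h2 i (by omega) j (by omega) hij
      · intro hk
        obtain ⟨Q, h1, h2⟩ := (ih hq k _ hW').1 (by omega)
        refine ⟨Q, {a}, fun i hi => ?_, h2, conn_singleton a, by simp, rfl, a, haW, rfl⟩
        obtain ⟨g1, g2, x, hx, y, hy, hh⟩ := h1 i hi
        exact ⟨g1, fun x hx => hsup x (g2 x hx),
          Set.disjoint_singleton_left.2 fun h => ha (g2 a h), x, Finset.mem_of_mem_erase hx, y,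
          Finset.mem_of_mem_erase hy, hh⟩
    · rw [Finset.erase_eq_of_notMem haW] at hW'
      constructor
      · intro hk
        obtain ⟨Q, h1, h2⟩ := (ih hq k _ hW').1 hk
        exact ⟨Q, fun i hi => ⟨(h1 i hi).1, fun x hx => hsup x ((h1 i hi).2.1 x hx),
          (h1 i hi).2.2⟩, h2⟩
      · intro hk
        obtain ⟨Q, R, h1, h2, h3, h4, h5, y, hy, hyR⟩ := (ih hq k _ hW').2 hk
        refine ⟨Q, insert a R, fun i hi => ?_, h2, h3.insert_adj h5 h, ?_, Or.inl rfl, y, hy,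
          Or.inr hyR⟩
        · obtain ⟨g1, g2, g3, g4⟩ := h1 i hi
          exact ⟨g1, fun x hx => hsup x (g2 x hx),
            Set.disjoint_insert_left.2 ⟨fun h => ha (g2 a h), g3⟩, g4⟩
        · rintro x (rfl | hx)
          · simp
          · exact hsup x (h4 x hx)

/-- A fixed-point-free map with fibres of size at most `q` is injective on some `k`-subset of
any large set, and moreover maps this subset to its complement. -/
lemma greedy {ι : Type} (φ : ι → ι) (q : ℕ) : ∀ (k : ℕ) (I : Finset ι), (∀ i ∈ I, φ i ≠ i) →
    (∀ h, #(I.filter fun i => φ i = h) ≤ q) → k * (2 * q + 2) ≤ #I →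
    ∃ I' ⊆ I, #I' = k ∧ ∀ i ∈ I', ∀ j ∈ I', φ i ≠ j ∧ (φ i = φ j → i = j) := by
  intro k
  induction k with
  | zero => exact fun I _ _ _ => ⟨∅, by simp, by simp, by simp⟩
  | succ k ih =>
    intro I hI hq hk
    obtain ⟨i, hi⟩ := Finset.card_pos.1 (by
      have : 0 < (k + 1) * (2 * q + 2) := by positivity
      omega : 0 < #I)
    set R : Finset ι := {i, φ i} ∪ ((I.filter fun j => φ j = φ i) ∪ I.filter fun j => φ j = i)
      with hR
    have hRc : #R ≤ 2 * q + 2 := by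
      refine (Finset.card_union_le _ _).trans ?_
      have h1 : #({i, φ i} : Finset ι) ≤ 2 := Finset.card_le_two
      have h2 := Finset.card_union_le (I.filter fun j => φ j = φ i) (I.filter fun j => φ j = i)
      have h3 := hq (φ i)
      have h4 := hq i
      omega
    have hsd : #I ≤ #(I \ R) + #R := by
      have := Finset.le_card_sdiff R I
      omega
    have hmem : ∀ j ∈ I \ R, j ≠ i ∧ j ≠ φ i ∧ φ j ≠ φ i ∧ φ j ≠ i := by
      intro j hj
      simp only [hR, Finset.mem_sdiff, Finset.mem_union, Finset.mem_insert, Finset.mem_singleton,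
        Finset.mem_filter] at hj
      tauto
    obtain ⟨I', h1, h2, h3⟩ := ih (I \ R) (fun j hj => hI j (Finset.mem_sdiff.1 hj).1)
      (fun h => (Finset.card_le_card (Finset.filter_subset_filter _ Finset.sdiff_subset)).trans
        (hq h)) (by
        have : (k + 1) * (2 * q + 2) = k * (2 * q + 2) + (2 * q + 2) := by ring
        omega)
    have hiI' : i ∉ I' := fun h => (hmem i (h1 h)).1 rfl
    refine ⟨insert i I', Finset.insert_subset hi (h1.trans Finset.sdiff_subset), by
      rw [Finset.card_insert_of_notMem hiI', h2], ?_⟩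
    intro x hx y hy
    rw [Finset.mem_insert] at hx hy
    rcases hx with rfl | hx <;> rcases hy with rfl | hy
    · exact ⟨hI _ hi, fun _ => rfl⟩
    · have := hmem y (h1 hy)
      exact ⟨this.2.1.symm, fun h => absurd h.symm this.2.2.1⟩
    · have := hmem x (h1 hx)
      exact ⟨this.2.2.2, fun h => absurd h this.2.2.1⟩
    · exact h3 x hx y hy

/-- If a `B`-`B`-path runs through a vertex `a ∈ A` and a connected set `R` joins it to another
vertex `x ∈ A`, then there is an `A`-`A`-`B`-path in the union: follow `R` from `x` to the
`B`-`B`-path, pass through `a`, and continue to the end of the path on the far side of `a`. -/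
lemma bab_link {a : V} {P Q R : Set V} (hF : Fork G a P Q) (ha : a ∈ A) (hP : (P ∩ B).Nonempty)
    (hQ : (Q ∩ B).Nonempty) (hR : Conn G R) {x y : V} (hx : x ∈ R) (hxA : x ∈ A)
    (hxM : x ∉ insert a (P ∪ Q)) (hy : y ∈ R) (hyM : y ∈ insert a (P ∪ Q)) :
    AAB G A B (R ∪ insert a (P ∪ Q)) := by
  obtain ⟨p, hp⟩ := hR x hx y hy
  obtain ⟨v, hv, -, R', hR', hxR', hRp, hd, u, hu, huv⟩ := first_hit p hxM hyM
  simp only [Set.disjoint_insert_right, Set.disjoint_union_right] at hd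
  obtain ⟨haR, hRP, hRQ⟩ := hd
  have hRR : R' ⊆ R := fun z hz => hp z (hRp z hz)
  rcases hv with rfl | hv | hv
  · refine ⟨v, R', P, ⟨⟨hR', hF.connD, hRP, haR, hF.notD, ⟨u, hu, huv.symm⟩, hF.adjD⟩, ha,
      ⟨x, hxR', hxA⟩, hP⟩, ?_⟩
    rintro z (rfl | hz | hz)
    · simp
    · exact Or.inl (hRR hz)
    · simp [hz]
  · obtain ⟨z, hz, haz⟩ := hF.adjD
    refine ⟨a, P ∪ R', Q, ⟨⟨hF.connD.union_adj hR' hv hu huv.symm, hF.connE,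
      Set.disjoint_union_left.2 ⟨hF.disj, hRQ⟩, fun h => h.elim hF.notD haR, hF.notE,
      ⟨z, Or.inl hz, haz⟩, hF.adjE⟩, ha, ⟨x, Or.inr hxR', hxA⟩, hQ⟩, ?_⟩
    rintro z (rfl | (hz | hz) | hz)
    · simp
    · simp [hz]
    · exact Or.inl (hRR hz)
    · simp [hz]
  · obtain ⟨z, hz, haz⟩ := hF.adjE
    refine ⟨a, Q ∪ R', P, ⟨⟨hF.connE.union_adj hR' hv hu huv.symm, hF.connD,
      Set.disjoint_union_left.2 ⟨hF.disj.symm, hRP⟩, fun h => h.elim hF.notE haR, hF.notD,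
      ⟨z, Or.inl hz, haz⟩, hF.adjD⟩, ha, ⟨x, Or.inr hxR', hxA⟩, hP⟩, ?_⟩
    rintro z (rfl | (hz | hz) | hz)
    · simp
    · simp [hz]
    · exact Or.inl (hRR hz)
    · simp [hz]

variable [Fintype V]

/-- From each vertex of a doubly free set there are two paths to `B`, called its legs, and all
these paths are disjoint and avoid the set. -/
lemma Haven.legs {t : ℕ} (H : Haven G A B t) {Z : Finset V} (hZ : Free2 G A B Z)
    (ht : 3 * #Z ≤ t) :
    ∃ P : V × Bool → Set V,
      (∀ i, i.1 ∈ Z → ∃ (u w : V) (p : G.Walk u w), p.IsPath ∧ P i = {z | z ∈ p.support} ∧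
        G.Adj i.1 u ∧ w ∈ B ∧ ∀ x ∈ P i, x ∉ Z) ∧
      ∀ i j, i.1 ∈ Z → j.1 ∈ Z → i ≠ j → Disjoint (P i) (P j) := by
  obtain ⟨P, hP, hP'⟩ := menger G (Finset.univ.filter fun b => b ∈ B) _ _ Zᶜ
    (Z ×ˢ (Finset.univ : Finset Bool)) (fun i => Zᶜ.filter (G.Adj i.1)) rfl rfl
    (fun i _ => Finset.filter_subset _ _) (by
    intro U hU
    set T : Finset V := Finset.univ.filter fun b => b ∈ B with hTdef
    set J0 := Z.filter fun a => Disjoint (Zᶜ.filter (G.Adj a)) U with hJ0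
    have e1 : ((Z ×ˢ (Finset.univ : Finset Bool)).filter fun i =>
        Disjoint (Zᶜ.filter (G.Adj i.1)) U) = J0 ×ˢ (Finset.univ : Finset Bool) := by
      ext ⟨a, ε⟩; simp [hJ0]
    have hUZ : ∀ x ∈ U, x ∉ Z := fun x hx => by simpa using hU hx
    rw [e1, Finset.card_product, Finset.card_univ, Fintype.card_bool]
    have hJ0Z : #J0 ≤ #Z := Finset.card_le_card (Finset.filter_subset _ _)
    by_cases hUA : AAB G A B {v | v ∈ U}
    · have h1 := hZ U hUA
      have h2 : Z \ U = Z := by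
        ext x; rw [Finset.mem_sdiff]
        exact ⟨fun h => h.1, fun h => ⟨h, fun h' => hUZ x h' h⟩⟩
      have h3 : J0 ⊆ Z \ (U ∪ bd G U) := by
        intro x hx
        obtain ⟨hxZ, hd⟩ := Finset.mem_filter.1 hx
        rw [Finset.mem_sdiff, Finset.mem_union]
        refine ⟨hxZ, ?_⟩
        rintro (h | h)
        · exact hUZ x h hxZ
        · obtain ⟨-, u, hu, hux⟩ := mem_bd.1 h
          exact Finset.disjoint_left.1 hd (Finset.mem_filter.2 ⟨hU hu, hux.symm⟩) hu
      have h4 : bd G U ⊆ bdT G Zᶜ T U ∪ (Z \ J0) := by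
        intro x hx
        obtain ⟨hxU, u, hu, hux⟩ := mem_bd.1 hx
        by_cases hxZ : x ∈ Z
        · refine Finset.mem_union_right _ (Finset.mem_sdiff.2 ⟨hxZ, fun h => ?_⟩)
          exact Finset.disjoint_left.1 (Finset.mem_filter.1 h).2
            (Finset.mem_filter.2 ⟨hU hu, hux.symm⟩) hu
        · exact Finset.mem_union_left _
            (mem_bdT.2 ⟨Finset.mem_compl.2 hxZ, hxU, Or.inr ⟨u, hu, hux⟩⟩)
      have h5 := Finset.card_le_card h3
      have h6 := (Finset.card_le_card h4).trans (Finset.card_union_le _ _)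
      have hJ0sub : J0 ⊆ Z := Finset.filter_subset _ _
      have h7 := Finset.card_sdiff_add_card_eq_card hJ0sub
      rw [defect, h2] at h1
      omega
    · by_contra hlt
      obtain ⟨a, D, E, hT, hX⟩ := H.trip (bdT G Zᶜ T U ∪ Z)
        ((Finset.card_union_le _ _).trans (by omega))
      have hX1 : ∀ x ∈ insert a (D ∪ E), x ∉ Z := fun x hx h =>
        hX x hx (Finset.mem_union_right _ h)
      have hX2 : ∀ x ∈ insert a (D ∪ E), x ∉ bdT G Zᶜ T U := fun x hx h =>
        hX x hx (Finset.mem_union_left _ h)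
      obtain ⟨b, hb, hbB⟩ := hT.memE
      have hb' : b ∈ insert a (D ∪ E) := Or.inr (Or.inr hb)
      have hbU : b ∈ U := by
        by_contra h
        exact hX2 b hb' (mem_bdT.2 ⟨Finset.mem_compl.2 (hX1 b hb'), h, Or.inl (by simp [hTdef, hbB])⟩)
      refine hUA (hT.aab.mono ?_)
      refine hT.fork.conn.closed (fun x hx hxU y hy hxy => ?_) hb' hbU
      by_contra h
      exact hX2 y hy (mem_bdT.2 ⟨Finset.mem_compl.2 (hX1 y hy), h, Or.inr ⟨x, hxU, hxy⟩⟩))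
  refine ⟨P, fun i hi => ?_, fun i j hi hj hij => hP' i (by simp [hi]) j (by simp [hj]) hij⟩
  obtain ⟨u, hu, w, hw, p, hp, h1, h2, -⟩ := hP i (by simp [hi])
  refine ⟨u, w, p, hp, h1, (Finset.mem_filter.1 hu).2, (Finset.mem_filter.1 hw).2, ?_⟩
  intro x hx
  simpa using h2 hx

/-- A large doubly free subset `Z` of `A` yields a packing. Let `M a` consist of `a ∈ Z` and its two
legs. Half of `Z` is linked to the other half; each linking path is cut at its first vertex `v i` in
some `M h` with `h ≠ i`, where `φ i = h`. If many of these paths end on one leg of some `h`, the leg is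
cut into pieces, each joining two such paths from `i` and `j`, so that `i` is joined to the
`B`-`B`-path `M j`. Otherwise `φ` has small fibres, and on a subset the path from `i` joins `i` to
the `B`-`B`-path `M (φ i)`, disjointly for different `i`. In both cases `bab_link` applies. -/
lemma Haven.pack_of_free2 {t : ℕ} (H : Haven G A B t) (k : ℕ) {Z : Finset V}
    (hZA : ∀ z ∈ Z, z ∈ A) (hZ : Free2 G A B Z) (hc : #Z = 2 * (k * (8 * k + 2)))
    (ht : 3 * #Z ≤ t) : Pack G A B k := by
  obtain ⟨P, hP, hPd⟩ := H.legs hZ ht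
  have hfork : ∀ a ∈ Z, Fork G a (P (a, false)) (P (a, true)) := by
    intro a ha
    obtain ⟨u, w, p, hp, h1, h2, h3, h4⟩ := hP (a, false) ha
    obtain ⟨u', w', p', hp', h1', h2', h3', h4'⟩ := hP (a, true) ha
    refine ⟨h1 ▸ conn_support p, h1' ▸ conn_support p', hPd _ _ ha ha (by simp),
      fun h => h4 a h ha, fun h => h4' a h ha, ⟨u, ?_, h2⟩, ⟨u', ?_, h2'⟩⟩
    · rw [h1]; exact p.start_mem_support
    · rw [h1']; exact p'.start_mem_support
  have hPB : ∀ a ∈ Z, ∀ ε, (P (a, ε) ∩ B).Nonempty := by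
    intro a ha ε
    obtain ⟨u, w, p, hp, h1, h2, h3, h4⟩ := hP (a, ε) ha
    refine ⟨w, ?_, h3⟩
    rw [h1]; exact p.end_mem_support
  have hPZ : ∀ a ∈ Z, ∀ ε, ∀ x ∈ P (a, ε), x ∉ Z := by
    intro a ha ε
    obtain ⟨u, w, p, hp, h1, h2, h3, h4⟩ := hP (a, ε) ha
    exact h4
  set M : V → Set V := fun a => insert a (P (a, false) ∪ P (a, true)) with hM
  have hMself : ∀ a, a ∈ M a := fun a => Or.inl rfl
  have hMd : ∀ a ∈ Z, ∀ b ∈ Z, a ≠ b → Disjoint (M a) (M b) := by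
    intro a ha b hb hab
    have key : ∀ ε δ, Disjoint (P (a, ε)) (P (b, δ)) := fun ε δ =>
      hPd _ _ ha hb (by simp [hab])
    have k1 : ∀ ε, a ∉ P (b, ε) := fun ε h => hPZ b hb ε a h ha
    have k2 : ∀ ε, b ∉ P (a, ε) := fun ε h => hPZ a ha ε b h hb
    simp [hM, hab.symm, key, k1, k2]
  obtain ⟨I, hIZ, hI⟩ := Finset.exists_subset_card_eq
    (show k * (8 * k + 2) ≤ #Z by omega)
  have hJ : #(Z \ I) = k * (8 * k + 2) := by
    rw [Finset.card_sdiff_of_subset hIZ]; omega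
  obtain ⟨C, hC, hCd⟩ := H.link (hZ.free.mono hIZ)
    (hZ.free.mono (Finset.sdiff_subset : Z \ I ⊆ Z)) (by omega) (by omega)
  have hstep : ∀ i : V, ∃ (v h : V) (D : Set V), i ∈ I → h ∈ Z ∧ h ≠ i ∧ v ∈ M h ∧ v ∈ C i ∧
      Conn G D ∧ i ∈ D ∧ D ⊆ C i ∧ (∀ h ∈ Z, h ≠ i → Disjoint D (M h)) ∧
      ∃ u ∈ D, G.Adj u v := by
    intro i
    by_cases hi : i ∈ I
    · obtain ⟨w, hw, p, hp, hCp, -⟩ := hC i hi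
      obtain ⟨hwZ, hwI⟩ := Finset.mem_sdiff.1 hw
      have hwi : w ≠ i := by rintro rfl; exact hwI hi
      obtain ⟨v, hv, hvp, R, hR, hiR, hRp, hd, u, hu, huv⟩ :=
        first_hit (M := {x | ∃ h ∈ Z, h ≠ i ∧ x ∈ M h}) p (by
          rintro ⟨h, hh, hne, hih⟩
          exact Set.disjoint_left.1 (hMd h hh i (hIZ hi) hne) hih (hMself i))
          ⟨w, hwZ, hwi, hMself w⟩
      obtain ⟨h, hh, hne, hvh⟩ := hv
      refine ⟨v, h, R, fun _ => ⟨hh, hne, hvh, ?_, hR, hiR, ?_, ?_, u, hu, huv⟩⟩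
      · rw [hCp]; exact hvp
      · rw [hCp]; exact hRp
      · intro h' hh' hne'
        rw [Set.disjoint_left] at hd ⊢
        exact fun x hx hx' => hd hx ⟨h', hh', hne', hx'⟩
    · exact ⟨i, i, ∅, fun h => absurd h hi⟩
  choose v φ D hst using hstep
  have hDd : ∀ i ∈ I, ∀ j ∈ I, i ≠ j → Disjoint (D i) (D j) := fun i hi j hj hij =>
    (hCd i hi j hj hij).mono (hst i hi).2.2.2.2.2.2.1 (hst j hj).2.2.2.2.2.2.1
  have hvinj : ∀ i ∈ I, ∀ j ∈ I, v i = v j → i = j := by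
    intro i hi j hj hij
    by_contra hne
    exact Set.disjoint_left.1 (hCd i hi j hj hne) (hst i hi).2.2.2.1 (hij ▸ (hst j hj).2.2.2.1)
  have hDM : ∀ i ∈ I, ∀ h ∈ Z, h ≠ i → Disjoint (D i) (M h) := fun i hi =>
    (hst i hi).2.2.2.2.2.2.2.1
  -- Case distinction: is there a leg on which at least `2 * k` of the cut paths end?
  by_cases hhub : ∃ h ∈ Z, ∃ ε, 2 * k ≤ #(I.filter fun i => φ i = h ∧ v i ∈ P (h, ε))
  · obtain ⟨h, hh, ε, hcard⟩ := hhub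
    obtain ⟨x, y, p, hp, hPp, -, -, -⟩ := hP (h, ε) hh
    set F := I.filter fun i => φ i = h ∧ v i ∈ P (h, ε) with hF
    have hFm : ∀ i ∈ F, i ∈ I ∧ φ i = h ∧ v i ∈ P (h, ε) := fun i hi => Finset.mem_filter.1 hi
    have hFne : ∀ i ∈ F, h ≠ i := fun i hi => by
      have := (hst i (hFm i hi).1).2.1
      rwa [(hFm i hi).2.1] at this
    have himg : #(F.image v) = #F := Finset.card_image_of_injOn fun i hi j hj hij =>
      hvinj i (hFm i hi).1 j (hFm j hj).1 hij
    obtain ⟨Q, hQ, hQd⟩ := (path_pairs p hp k (F.image v) (by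
      intro z hz
      obtain ⟨i, hi, rfl⟩ := Finset.mem_image.1 hz
      have := (hFm i hi).2.2
      rw [hPp] at this
      exact this)).1 (by omega)
    have hsel : ∀ l, ∃ i j, l < k → i ∈ F ∧ j ∈ F ∧ i ≠ j ∧ v i ∈ Q l ∧ v j ∈ Q l := by
      intro l
      by_cases hl : l < k
      · obtain ⟨-, -, x, hx, y, hy, hxy, hxQ, hyQ⟩ := hQ l hl
        obtain ⟨i, hi, rfl⟩ := Finset.mem_image.1 hx
        obtain ⟨j, hj, rfl⟩ := Finset.mem_image.1 hy
        exact ⟨i, j, fun _ => ⟨hi, hj, fun e => hxy (e ▸ rfl), hxQ, hyQ⟩⟩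
      · exact ⟨h, h, fun e => absurd e hl⟩
    choose i j hij using hsel
    have hQM : ∀ l < k, Q l ⊆ M h := by
      intro l hl z hz
      have : z ∈ P (h, ε) := by rw [hPp]; exact (hQ l hl).2.1 z hz
      cases ε
      · exact Or.inr (Or.inl this)
      · exact Or.inr (Or.inr this)
    refine pack_of_finset (Finset.range k)
      (fun l => (D (i l) ∪ (Q l ∪ D (j l))) ∪ M (j l)) (by simp) ?_ ?_
    · intro l hl
      rw [Finset.mem_range] at hl
      obtain ⟨hi, hj, hne, hvi, hvj⟩ := hij l hl
      have hiI := (hFm _ hi).1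
      have hjI := (hFm _ hj).1
      obtain ⟨-, -, -, -, ci, si, -, -, ui, hui, hai⟩ := hst _ hiI
      obtain ⟨-, -, -, -, cj, sj, -, -, uj, huj, haj⟩ := hst _ hjI
      have hconn : Conn G (D (i l) ∪ (Q l ∪ D (j l))) := by
        refine ci.union_adj ((hQ l hl).1.union_adj cj hvj huj haj.symm) hui (Or.inl hvi) hai
      refine bab_link (hfork _ (hIZ hjI)) (hZA _ (hIZ hjI)) (hPB _ (hIZ hjI) _)
        (hPB _ (hIZ hjI) _) hconn (Or.inl si) (hZA _ (hIZ hiI)) ?_ (Or.inr (Or.inr sj))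
        (hMself _)
      exact Set.disjoint_left.1 (hMd _ (hIZ hiI) _ (hIZ hjI) hne) (hMself _)
    · intro l hl l' hl' hne
      rw [Finset.mem_range] at hl hl'
      obtain ⟨hi, hj, -, hvi, hvj⟩ := hij l hl
      obtain ⟨hi', hj', -, hvi', hvj'⟩ := hij l' hl'
      have hQQ := hQd l hl l' hl' hne
      have ne : ∀ x y, v x ∈ Q l → v y ∈ Q l' → x ≠ y := by
        rintro x y hx hy rfl
        exact Set.disjoint_left.1 hQQ hx hy
      have fD : ∀ x ∈ F, ∀ y ∈ F, x ≠ y → Disjoint (D x) (D y) := fun x hx y hy =>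
        hDd x (hFm x hx).1 y (hFm y hy).1
      have fM : ∀ x ∈ F, ∀ y ∈ F, x ≠ y → Disjoint (M x) (M y) := fun x hx y hy =>
        hMd x (hIZ (hFm x hx).1) y (hIZ (hFm y hy).1)
      have fDM : ∀ x ∈ F, ∀ y ∈ F, x ≠ y → Disjoint (D x) (M y) := fun x hx y hy hxy =>
        hDM x (hFm x hx).1 y (hIZ (hFm y hy).1) hxy.symm
      have fDQ : ∀ x ∈ F, ∀ l < k, Disjoint (D x) (Q l) := fun x hx l hl =>
        (hDM x (hFm x hx).1 h hh (hFne x hx)).mono_right (hQM l hl)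
      have fMQ : ∀ x ∈ F, ∀ l < k, Disjoint (M x) (Q l) := fun x hx l hl =>
        (hMd x (hIZ (hFm x hx).1) h hh (hFne x hx).symm).mono_right (hQM l hl)
      have n1 := ne _ _ hvi hvi'
      have n2 := ne _ _ hvi hvj'
      have n3 := ne _ _ hvj hvi'
      have n4 := ne _ _ hvj hvj'
      simp only [Set.disjoint_union_left, Set.disjoint_union_right]
      repeat' apply And.intro
      all_goals first
        | exact fD _ hi _ hi' n1 | exact fD _ hi _ hj' n2 | exact fD _ hj _ hi' n3
        | exact fD _ hj _ hj' n4 | exact hQQ | exact fDQ _ hi l' hl' | exact fDQ _ hj l' hl'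
        | exact (fDQ _ hi' l hl).symm | exact (fDQ _ hj' l hl).symm
        | exact fDM _ hi _ hj' n2 | exact fDM _ hj _ hj' n4
        | exact (fDM _ hi' _ hj n3.symm).symm | exact (fDM _ hj' _ hj n4.symm).symm
        | exact (fMQ _ hj' l hl).symm | exact fMQ _ hj l' hl' | exact fM _ hj _ hj' n4
  · push Not at hhub
    have hfib : ∀ h, #(I.filter fun i => φ i = h) ≤ 4 * k := by
      intro h
      by_cases hh : h ∈ Z
      · have h1 := hhub h hh false
        have h2 := hhub h hh true
        have h3 : #(I.filter fun i => v i = h) ≤ 1 := by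
          rw [Finset.card_le_one]
          intro i hi j hj
          rw [Finset.mem_filter] at hi hj
          exact hvinj i hi.1 j hj.1 (hi.2.trans hj.2.symm)
        have hsub : (I.filter fun i => φ i = h) ⊆ (I.filter fun i => v i = h) ∪
            ((I.filter fun i => φ i = h ∧ v i ∈ P (h, false)) ∪
              (I.filter fun i => φ i = h ∧ v i ∈ P (h, true))) := by
          intro i hi
          obtain ⟨hiI, rfl⟩ := Finset.mem_filter.1 hi
          have := (hst i hiI).2.2.1
          simp only [Finset.mem_union, Finset.mem_filter, hiI, true_and]
          exact this
        have h4 := (Finset.card_le_card hsub).trans (Finset.card_union_le _ _)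
        have h5 := Finset.card_union_le (I.filter fun i => φ i = h ∧ v i ∈ P (h, false))
              (I.filter fun i => φ i = h ∧ v i ∈ P (h, true))
        omega
      · rw [Finset.filter_eq_empty_iff.2]
        · simp
        · rintro i hi rfl
          exact hh (hst i hi).1
    obtain ⟨I', hI', hI'c, hI'φ⟩ := greedy φ (4 * k) k I (fun i hi => (hst i hi).2.1) hfib (by
      rw [hI]
      exact le_of_eq (by ring))
    refine pack_of_finset I' (fun i => (D i ∪ {v i}) ∪ M (φ i)) (by omega) ?_ ?_
    · intro i hi
      have hiI := hI' hi
      obtain ⟨h1, h2, h3, -, h4, h5, -, -, u, hu, huv⟩ := hst i hiI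
      refine bab_link (hfork _ h1) (hZA _ h1) (hPB _ h1 _) (hPB _ h1 _)
        (h4.union_adj (conn_singleton (v i)) hu rfl huv) (Or.inl h5) (hZA _ (hIZ hiI)) ?_
        (Or.inr rfl) h3
      exact Set.disjoint_left.1 (hMd _ (hIZ hiI) _ h1 h2.symm) (hMself _)
    · intro i hi j hj hij
      have hiI := hI' hi
      have hjI := hI' hj
      have e : ∀ i ∈ I', (D i ∪ {v i}) ∪ M (φ i) = D i ∪ M (φ i) := by
        intro i hi
        have := (hst i (hI' hi)).2.2.1
        rw [Set.union_assoc, Set.union_eq_self_of_subset_left (s := {v i})]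
        simpa using this
      have hφi := (hst i hiI).1
      have hφj := (hst j hjI).1
      rw [e i hi, e j hj]
      simp only [Set.disjoint_union_left, Set.disjoint_union_right]
      refine ⟨⟨hDd i hiI j hjI hij, ?_⟩, ?_, ?_⟩
      · exact (hDM j hjI _ hφi (hI'φ i hi j hj).1).symm
      · exact hDM i hiI _ hφj (hI'φ j hj i hi).1
      · exact hMd _ hφi _ hφj fun h => hij ((hI'φ i hi j hj).2 h)

end

/-! ### The induction -/

section
variable {V : Type} {G : SimpleGraph V} {A B : Set V}

/-- The subgraph of `G` induced on `S`, kept on the vertex type `V` with the vertices outside `S`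
isolated. -/
def res (G : SimpleGraph V) (S : Set V) : SimpleGraph V where
  Adj u v := G.Adj u v ∧ u ∈ S ∧ v ∈ S
  symm := ⟨fun _ _ h => ⟨h.1.symm, h.2.2, h.2.1⟩⟩
  loopless := ⟨fun _ h => h.1.ne rfl⟩

lemma Conn.transfer {H : SimpleGraph V} {S : Set V} (hS : Conn G S)
    (h : ∀ x ∈ S, ∀ y ∈ S, G.Adj x y → H.Adj x y) : Conn H S := by
  have key : ∀ (u v : V) (p : G.Walk u v), (∀ z ∈ p.support, z ∈ S) →
      ∃ q : H.Walk u v, ∀ z ∈ q.support, z ∈ S := by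
    intro u v p
    induction p with
    | nil => exact fun hp => ⟨Walk.nil, by simpa using hp⟩
    | cons hadj p ih =>
      intro hp
      obtain ⟨q, hq⟩ := ih fun z hz => hp z (by simp [hz])
      refine ⟨Walk.cons (h _ (hp _ (by simp)) _ (hp _ (by simp)) hadj) q, fun z hz => ?_⟩
      rw [Walk.support_cons, List.mem_cons] at hz
      rcases hz with rfl | hz
      · exact hp _ (by simp)
      · exact hq z hz
  intro x hx y hy
  obtain ⟨p, hp⟩ := hS x hx y hy
  exact key x y p hp

lemma AAB.of_res {S K : Set V} (h : AAB (res G S) (A ∩ S) (B ∩ S) K) : AAB G A B (K ∩ S) := by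
  obtain ⟨a, D, E, hT, hK⟩ := h
  have hsub : insert a (D ∪ E) ⊆ S := hT.fork.conn.closed
    (fun x _ _ y _ hxy => hxy.2.2) (Set.mem_insert _ _) hT.mem.2
  have tr : ∀ {C : Set V}, Conn (res G S) C → Conn G C := fun hC =>
    hC.transfer fun _ _ _ _ hxy => hxy.1
  refine ⟨a, D, E, ⟨⟨tr hT.fork.connD, tr hT.fork.connE, hT.fork.disj, hT.fork.notD,
    hT.fork.notE, ?_, ?_⟩, hT.mem.1, ?_, ?_⟩, Set.subset_inter hK hsub⟩
  · obtain ⟨x, hx, h⟩ := hT.fork.adjD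
    exact ⟨x, hx, h.1⟩
  · obtain ⟨x, hx, h⟩ := hT.fork.adjE
    exact ⟨x, hx, h.1⟩
  · obtain ⟨x, hx, h⟩ := hT.memD
    exact ⟨x, hx, h.1⟩
  · obtain ⟨x, hx, h⟩ := hT.memE
    exact ⟨x, hx, h.1⟩

lemma Trip.res {S D E : Set V} {a : V} (hT : Trip G A B a D E) (hsub : insert a (D ∪ E) ⊆ S) :
    Trip (res G S) (A ∩ S) (B ∩ S) a D E := by
  have ha : a ∈ S := hsub (Set.mem_insert _ _)
  have hD : D ⊆ S := fun x hx => hsub (Or.inr (Or.inl hx))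
  have hE : E ⊆ S := fun x hx => hsub (Or.inr (Or.inr hx))
  refine ⟨⟨hT.fork.connD.transfer fun x hx y hy h => ⟨h, hD hx, hD hy⟩,
    hT.fork.connE.transfer fun x hx y hy h => ⟨h, hE hx, hE hy⟩, hT.fork.disj, hT.fork.notD,
    hT.fork.notE, ?_, ?_⟩, ⟨hT.mem, ha⟩, ?_, ?_⟩
  · obtain ⟨x, hx, h⟩ := hT.fork.adjD
    exact ⟨x, hx, h, ha, hD hx⟩
  · obtain ⟨x, hx, h⟩ := hT.fork.adjE
    exact ⟨x, hx, h, ha, hE hx⟩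
  · obtain ⟨x, hx, h⟩ := hT.memD
    exact ⟨x, hx, h, hD hx⟩
  · obtain ⟨x, hx, h⟩ := hT.memE
    exact ⟨x, hx, h, hE hx⟩

lemma Pack.cons_res {S S' : Set V} {k : ℕ} (h : Pack (res G S) (A ∩ S) (B ∩ S) k)
    (h' : AAB G A B S') (hd : Disjoint S S') : Pack G A B (k + 1) := by
  obtain ⟨K, hK, hKd⟩ := h
  have h0 : ∀ i, Disjoint S' (K i ∩ S) := fun i => hd.symm.mono_right Set.inter_subset_right
  refine ⟨Fin.cons S' fun i => K i ∩ S, fun i => ?_, fun i j => ?_⟩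
  · refine Fin.cases ?_ (fun i => ?_) i
    · exact h'
    · exact (hK i).of_res
  · refine Fin.cases ?_ (fun i => ?_) i <;> refine Fin.cases ?_ (fun j => ?_) j
    · exact fun h => absurd rfl h
    · exact fun _ => h0 j
    · exact fun _ => (h0 i).symm
    · exact fun hij => (hKd i j fun e => hij (e ▸ rfl)).mono Set.inter_subset_left
        Set.inter_subset_left

/-- The size of the set `X` in `Haven.free2_or_lobes`. -/
def lobeSize (n : ℕ) : ℕ := 3 * n + 3 * n * (2 * n + 1)

/-- A haven order that suffices for a packing of size `k`: the first summand is what `Lobes.pack`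
needs, and `2 * (k * (8 * k + 2))` is the size of the doubly free set in `Haven.pack_of_free2`. -/
def order (k : ℕ) : ℕ :=
  15 * (k + lobeSize (2 * (k * (8 * k + 2)))) + 4 * (2 * (k * (8 * k + 2)))

/-- The Erdős–Pósa function. In the step, `order (k + 1)` bounds a separator and `bound k` the
cover of each of its two sides. -/
def bound : ℕ → ℕ
  | 0 => 0
  | k + 1 => order (k + 1) + 2 * bound k

lemma Haven.pack [Fintype V] {k : ℕ} (H : Haven G A B (order k)) : Pack G A B k := by
  have ht : order k = 15 * (k + lobeSize (2 * (k * (8 * k + 2)))) +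
    4 * (2 * (k * (8 * k + 2))) := rfl
  rcases H.free2_or_lobes (2 * (k * (8 * k + 2))) (by omega) with
    ⟨Z, hZA, hc, hZ⟩ | ⟨X, L, hX, hL⟩
  · exact H.pack_of_free2 k hZA hZ hc (by omega)
  · have hX' : #X ≤ lobeSize (2 * (k * (8 * k + 2))) := hX
    exact hL.pack H k (by omega)

/-- The Erdős–Pósa property for trips. If the graph is not a haven of order `order (k + 1)`,
either few vertices meet all trips, or a separation of small order has trips on both sides; then the
induction hypothesis for one side gives `k` sets, which the other side extends, or the separator
together with covers of both sides is a cover. -/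
theorem pack_or_cover [Fintype V] (k : ℕ) : ∀ (G : SimpleGraph V) (A B : Set V),
    Pack G A B k ∨ ∃ X : Finset V, #X ≤ bound k ∧ ¬ AAB G A B {v | v ∉ X} := by
  induction k with
  | zero => exact fun G A B => Or.inl ⟨fun i => i.elim0, fun i => i.elim0, fun i => i.elim0⟩
  | succ k ih =>
    intro G A B
    have hb : bound (k + 1) = order (k + 1) + 2 * bound k := rfl
    by_cases hbig : ∀ X : Finset V, #X ≤ order (k + 1) → AAB G A B {v | v ∉ X}
    · by_cases htan : ∀ U : Finset V, #(bd G U) ≤ order (k + 1) → AAB G A B {v | v ∈ U} →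
          ¬ AAB G A B {v | v ∉ U ∧ v ∉ bd G U}
      · exact Or.inl (Haven.pack ⟨hbig, htan⟩)
      · push Not at htan
        obtain ⟨U, hU, h1, h2⟩ := htan
        have hd : Disjoint {v | v ∈ U} {v | v ∉ U ∧ v ∉ bd G U} :=
          Set.disjoint_left.2 fun v hv hv' => hv'.1 hv
        rcases ih (res G {v | v ∈ U}) (A ∩ {v | v ∈ U}) (B ∩ {v | v ∈ U}) with hp | ⟨X₁, hX₁, hn₁⟩
        · exact Or.inl (hp.cons_res h2 hd)
        rcases ih (res G {v | v ∉ U ∧ v ∉ bd G U}) (A ∩ {v | v ∉ U ∧ v ∉ bd G U})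
          (B ∩ {v | v ∉ U ∧ v ∉ bd G U}) with hp | ⟨X₂, hX₂, hn₂⟩
        · exact Or.inl (hp.cons_res h1 hd.symm)
        refine Or.inr ⟨bd G U ∪ (X₁ ∪ X₂), ?_, ?_⟩
        · have e1 := Finset.card_union_le (bd G U) (X₁ ∪ X₂)
          have e2 := Finset.card_union_le X₁ X₂
          omega
        · rintro ⟨a, D, E, hT, hK⟩
          have hK' : ∀ x ∈ insert a (D ∪ E), x ∉ bd G U ∧ x ∉ X₁ ∧ x ∉ X₂ := by
            intro x hx
            have := hK hx
            simpa [not_or] using this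
          by_cases ha : a ∈ U
          · have hsub : insert a (D ∪ E) ⊆ {v | v ∈ U} := by
              refine hT.fork.conn.closed (fun x _ hxU y hy hxy => ?_) (Set.mem_insert _ _) ha
              by_contra hyU
              exact (hK' y hy).1 (mem_bd.2 ⟨hyU, x, hxU, hxy⟩)
            exact hn₁ ⟨a, D, E, hT.res hsub, fun x hx => (hK' x hx).2.1⟩
          · have hsub : insert a (D ∪ E) ⊆ {v | v ∉ U ∧ v ∉ bd G U} := by
              refine hT.fork.conn.closed (fun x hx hxU y hy hxy => ⟨fun hyU => ?_, (hK' y hy).1⟩)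
                (Set.mem_insert _ _) ⟨ha, (hK' a (Set.mem_insert _ _)).1⟩
              exact hxU.2 (mem_bd.2 ⟨hxU.1, y, hyU, hxy.symm⟩)
            exact hn₂ ⟨a, D, E, hT.res hsub, fun x hx => (hK' x hx).2.2⟩
    · push Not at hbig
      obtain ⟨X, hX, hn⟩ := hbig
      exact Or.inr ⟨X, by omega, hn⟩

lemma aab_of_walk {u v x : V} (p : G.Walk u v) (hp : p.IsPath) (hu : u ∈ A) (hv : v ∈ B)
    (hx : x ∈ p.support) (hxu : x ≠ u) (hxv : x ≠ v) (hxA : x ∈ A) :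
    AAB G A B {z | z ∈ p.support} := by
  obtain ⟨D, cD, xD, eD, uD⟩ := tail_of_path (p.takeUntil x hx).reverse
    (hp.takeUntil hx).reverse
  obtain ⟨E, cE, xE, eE, vE⟩ := tail_of_path (p.dropUntil x hx) (hp.dropUntil hx)
  have hD : ∀ z ∈ D, z ∈ (p.takeUntil x hx).support := by
    intro z hz
    have : z ∈ {z | z ∈ (p.takeUntil x hx).reverse.support} := eD ▸ Set.mem_insert_of_mem _ hz
    simpa using this
  have hE : ∀ z ∈ E, z ∈ (p.dropUntil x hx).support := by
    intro z hz
    have : z ∈ {z | z ∈ (p.dropUntil x hx).support} := eE ▸ Set.mem_insert_of_mem _ hz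
    exact this
  have hdisj : ∀ z ∈ (p.takeUntil x hx).support, z ∈ (p.dropUntil x hx).support → z = x := by
    intro z h1 h2
    have hn := hp.support_nodup
    rw [← p.take_spec hx, Walk.support_append] at hn
    rw [Walk.mem_support_iff] at h2
    rcases h2 with h2 | h2
    · exact h2
    · exact absurd h2 (List.disjoint_of_nodup_append hn h1)
  have adj : ∀ {w : V} {S : Set V} (q : G.Walk x w), w ≠ x →
      {z | z ∈ q.support} = insert x S → ∃ y ∈ S, G.Adj x y := by
    intro w S q hw hq
    cases q with
    | nil => exact absurd rfl hw
    | @cons _ y _ h q =>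
      refine ⟨y, ?_, h⟩
      have : y ∈ insert x S := hq ▸ (by simp)
      exact this.resolve_left h.ne'
  refine ⟨x, D, E, ⟨⟨cD, cE, ?_, xD, xE, adj _ hxu.symm eD, adj _ hxv.symm eE⟩, hxA,
    ⟨u, uD hxu.symm, hu⟩, ⟨v, vE hxv.symm, hv⟩⟩, ?_⟩
  · exact Set.disjoint_left.2 fun z h1 h2 => xD (hdisj z (hD z h1) (hE z h2) ▸ h1)
  · rintro z (rfl | hz | hz)
    · exact hx
    · exact p.support_takeUntil_subset_support hx (hD z hz)
    · exact p.support_dropUntil_subset_support hx (hE z hz)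

lemma AAB.exists_walk {K : Set V} (h : AAB G A B K) : ∃ (u v : V) (p : G.Walk u v),
    p.IsPath ∧ u ∈ A ∧ v ∈ B ∧ (∃ x ∈ p.support, x ≠ u ∧ x ≠ v ∧ x ∈ A) ∧
      ∀ z ∈ p.support, z ∈ K := by
  obtain ⟨a, D, E, hT, hK⟩ := h
  obtain ⟨x, hx, hax⟩ := hT.fork.adjD
  obtain ⟨y, hy, hay⟩ := hT.fork.adjE
  obtain ⟨u, huD, huA⟩ := hT.memD
  obtain ⟨v, hvE, hvB⟩ := hT.memE
  obtain ⟨p, hp, hpD⟩ := hT.fork.connD.exists_path huD hx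
  obtain ⟨q, hq, hqE⟩ := hT.fork.connE.exists_path hy hvE
  have hsup : ∀ z, z ∈ (p.append (Walk.cons hax.symm (Walk.cons hay q))).support ↔
      z ∈ p.support ∨ z = a ∨ z ∈ q.support := by
    intro z
    rw [Walk.mem_support_append_iff]
    simp only [Walk.support_cons, List.mem_cons]
    constructor
    · rintro (h | rfl | h)
      · exact Or.inl h
      · exact Or.inl p.end_mem_support
      · exact Or.inr h
    · rintro (h | h)
      · exact Or.inl h
      · exact Or.inr (Or.inr h)
  refine ⟨u, v, p.append (Walk.cons hax.symm (Walk.cons hay q)), ?_, huA, hvB,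
    ⟨a, (hsup a).2 (Or.inr (Or.inl rfl)), fun h => hT.fork.notD (h ▸ huD),
      fun h => hT.fork.notE (h ▸ hvE), hT.mem⟩, fun z hz => hK ?_⟩
  · rw [Walk.isPath_def, Walk.support_append]
    simp only [Walk.support_cons, List.tail_cons]
    refine List.Nodup.append hp.support_nodup
      (List.nodup_cons.2 ⟨fun h => hT.fork.notE (hqE a h), hq.support_nodup⟩) ?_
    intro z h1 h2
    rcases List.mem_cons.1 h2 with rfl | h2
    · exact hT.fork.notD (hpD _ h1)
    · exact Set.disjoint_left.1 hT.fork.disj (hpD z h1) (hqE z h2)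
  · rcases (hsup z).1 hz with h | rfl | h
    · exact Or.inr (Or.inl (hpD z h))
    · exact Set.mem_insert _ _
    · exact Or.inr (Or.inr (hqE z h))

end

end AABEP

/-- `A`-`A`-`B`-paths have the Erdős–Pósa property. -/
theorem AABPaths_erdosPosa :
    ∃ f : ℕ → ℕ, ∀ (V : Type) [Fintype V] (G : SimpleGraph V)
        (A B : Set V) (k : ℕ),
      (∃ P : Fin k → AABPath G A B,
        ∀ i j : Fin k, i ≠ j →
          List.Disjoint (P i).walk.support (P j).walk.support) ∨
      (∃ X : Finset V, X.card ≤ f k ∧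
        ∀ P : AABPath G A B, ∃ x ∈ X, x ∈ P.walk.support) := by
  refine ⟨AABEP.bound, fun V _ G A B k => ?_⟩
  rcases AABEP.pack_or_cover k G A B with ⟨K, hK, hd⟩ | ⟨X, hX, hn⟩
  · left
    choose u v p hp hu hv hx hpK using fun i => (hK i).exists_walk
    exact ⟨fun i => ⟨u i, v i, p i, hp i, hu i, hv i, hx i⟩, fun i j hij z h1 h2 =>
      Set.disjoint_left.1 (hd i j hij) (hpK i z h1) (hpK j z h2)⟩
  · refine Or.inr ⟨X, hX, fun P => ?_⟩
    by_contra hcon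
    push Not at hcon
    obtain ⟨x, hx, hxu, hxv, hxA⟩ := P.interiorA
    exact hn ((AABEP.aab_of_walk P.walk P.isPath P.firstMem P.lastMem hx hxu hxv hxA).mono
      fun z hz hzX => hcon z hzX hz)
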